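/- arXiv:1303.0702 — 2 statements merged into one kernel-verified Lean document; each statement's English description precedes it below -/
import Mathlib

section
/- Let λ, λ₀ ∈ ℂ*, a, a₀, b, b₀ ∈ ℂ with 0 ≤ Re a < 1 and 0 ≤ Re a₀ < 1, and let W, W₀ ∈ O_𝔚 be nontrivial simple 𝔚-modules. Suppose the Virasoro module L(W, λ, a, b) is simple. Then L(W, λ, a, b) ≅ L(W₀, λ₀, a₀, b₀) if and only if one of the following holds: (i) W ≅ W₀ as 𝔚-modules, λ = λ₀, a = a₀ and b = b₀; or (ii) W and W₀ are highest weight modules with highest weights b' and b'₀ respectively, and λ₀ = λ⁻¹, a = a₀, b = b'₀ + 1, b₀ = b' + 1. -/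
/-- A representation of the Witt algebra `𝔚 = span{d_i : i ≥ -1}`, encoded by the family of
operators `d i` (only the indices `i ≥ -1` are relevant) satisfying
`[d_m, d_n] = (n - m) d_{m+n}`. -/
structure WittRep (W : Type*) [AddCommGroup W] [Module ℂ W] where
  d : ℤ → W →ₗ[ℂ] W
  comm : ∀ m n : ℤ, -1 ≤ m → -1 ≤ n →
    d m ∘ₗ d n - d n ∘ₗ d m = (((n - m : ℤ) : ℂ)) • d (m + n)

namespace WittRep

variable {W : Type*} [AddCommGroup W] [Module ℂ W]

/-- Condition A : the module lies in the category `O_𝔚`. -/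
def InO (ρ : WittRep W) : Prop :=
  ∀ v : W, ∃ n : ℕ, ∀ i : ℤ, (n : ℤ) ≤ i → ρ.d i v = 0

/-- The module is trivial: the Lie algebra acts by zero. -/
def IsTrivial (ρ : WittRep W) : Prop := ∀ i : ℤ, -1 ≤ i → ρ.d i = 0

/-- A `𝔚`-submodule. -/
def Invariant (ρ : WittRep W) (U : Submodule ℂ W) : Prop :=
  ∀ i : ℤ, -1 ≤ i → ∀ u ∈ U, ρ.d i u ∈ U

/-- Simplicity of a `𝔚`-module. -/
def IsSimple (ρ : WittRep W) : Prop :=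
  (∃ v : W, v ≠ 0) ∧ ∀ U : Submodule ℂ W, ρ.Invariant U → U = ⊥ ∨ U = ⊤

/-- A `𝔟`-submodule (`𝔟 = span{d_i : i ≥ 0}`). -/
def BInvariant (ρ : WittRep W) (U : Submodule ℂ W) : Prop :=
  ∀ i : ℤ, 0 ≤ i → ∀ u ∈ U, ρ.d i u ∈ U

/-- The socle `Soc_𝔟(W)`: the sum of the minimal nonzero `𝔟`-submodules. -/
def Soc (ρ : WittRep W) : Submodule ℂ W :=
  sSup {U | ρ.BInvariant U ∧ U ≠ ⊥ ∧
    ∀ U' : Submodule ℂ W, ρ.BInvariant U' → U' ≠ ⊥ → U' ≤ U → U' = U}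

/-- `w₀` is a highest weight vector of weight `b'`. -/
def IsHW (ρ : WittRep W) (w₀ : W) (b' : ℂ) : Prop :=
  w₀ ≠ 0 ∧ ρ.d 0 w₀ = b' • w₀ ∧ ∀ i : ℤ, 1 ≤ i → ρ.d i w₀ = 0

/-- `w₀` generates the `𝔚`-module. -/
def Generates (ρ : WittRep W) (w₀ : W) : Prop :=
  ∀ U : Submodule ℂ W, ρ.Invariant U → w₀ ∈ U → U = ⊤

/-- The operator `e^{kt} d/dt = Σ_{i ≥ 0} (k^i/i!) d_{i-1}` (a finite sum on each vector of a
module in `O_𝔚`). -/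
noncomputable def E (ρ : WittRep W) (k : ℤ) (w : W) : W :=
  ∑ᶠ i : ℕ, (((k : ℂ) ^ i) / (Nat.factorial i : ℂ)) • ρ.d ((i : ℤ) - 1) w

/-- The action of `d_k` on `L(W, λ, a, b) = W ⊗ ℂ[t, t⁻¹]`, realized on `ℤ →₀ W`
(`w ⊗ t^j ↦ Finsupp.single j w`):
`d_k · (w ⊗ t^j) = ((λ^k e^{kt} − 1) d/dt + a + kb + j) w ⊗ t^{k+j}`. -/
noncomputable def Lact (ρ : WittRep W) (lam a b : ℂ) (k : ℤ) (f : ℤ →₀ W) : ℤ →₀ W :=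
  f.sum fun j w => Finsupp.single (k + j)
    (lam ^ k • ρ.E k w - ρ.d (-1) w + (a + (k : ℂ) * b + (j : ℂ)) • w)

/-- The PBW map `ℕ →₀ ℂ → W`, `(k, c) ↦ c • d_{-1}^k w₀`. -/
noncomputable def pbwMap (ρ : WittRep W) (w₀ : W) : (ℕ →₀ ℂ) →ₗ[ℂ] W :=
  Finsupp.lsum ℂ fun k : ℕ => ((ρ.d (-1)) ^ k) ∘ₗ LinearMap.toSpanSingleton ℂ W w₀

/-- `W` is the Verma `𝔚`-module with highest weight vector `w₀` of highest weight `b'`. -/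
def IsVerma (ρ : WittRep W) (w₀ : W) (b' : ℂ) : Prop :=
  ρ.d 0 w₀ = b' • w₀ ∧ (∀ i : ℤ, 1 ≤ i → ρ.d i w₀ = 0) ∧
    Function.Bijective (ρ.pbwMap w₀)

/-- `W^{(n)} = Σ_{i=0}^n d_{-1}^i (Soc_𝔟 W)`. -/
noncomputable def Wn (ρ : WittRep W) (n : ℕ) : Submodule ℂ W :=
  ⨆ i : Fin (n + 1), Submodule.map ((ρ.d (-1)) ^ (i : ℕ)) ρ.Soc

/-- `L₀(a, b') = span{d₁^i · (w₀ ⊗ t^{2j})} ⊆ L(W, -1, a, b' + 1)`. -/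
noncomputable def Lzero (ρ : WittRep W) (a b' : ℂ) (w₀ : W) : Submodule ℂ (ℤ →₀ W) :=
  Submodule.span ℂ
    {g | ∃ (i : ℕ) (j : ℤ), g = (ρ.Lact (-1) a (b' + 1) 1)^[i] (Finsupp.single (2 * j) w₀)}

/-- `L₁(a, b') = span{d₁^i · (w₀ ⊗ t^{2j+1})} ⊆ L(W, -1, a, b' + 1)`. -/
noncomputable def Lone (ρ : WittRep W) (a b' : ℂ) (w₀ : W) : Submodule ℂ (ℤ →₀ W) :=
  Submodule.span ℂ
    {g | ∃ (i : ℕ) (j : ℤ), g = (ρ.Lact (-1) a (b' + 1) 1)^[i] (Finsupp.single (2 * j + 1) w₀)}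

end WittRep

/-- A representation of the Lie algebra `𝔟 = span{d_i : i ≥ 0}`. -/
structure BRep (B : Type*) [AddCommGroup B] [Module ℂ B] where
  d : ℕ → B →ₗ[ℂ] B
  comm : ∀ m n : ℕ, d m ∘ₗ d n - d n ∘ₗ d m = (((n : ℂ) - (m : ℂ))) • d (m + n)

namespace BRep

variable {B : Type*} [AddCommGroup B] [Module ℂ B]

/-- Condition A : the module lies in the category `O_𝔟`. -/
def InO (ρ : BRep B) : Prop := ∀ v : B, ∃ n : ℕ, ∀ i : ℕ, n ≤ i → ρ.d i v = 0

def IsTrivial (ρ : BRep B) : Prop := ∀ i : ℕ, ρ.d i = 0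

def IsSimple (ρ : BRep B) : Prop :=
  (∃ v : B, v ≠ 0) ∧
    ∀ U : Submodule ℂ B, (∀ i : ℕ, ∀ u ∈ U, ρ.d i u ∈ U) → U = ⊥ ∨ U = ⊤

/-- The set of `r ∈ ℤ≥0` such that `d_{r+i} v = 0` for all `i ≥ 1`;
`ord_𝔟(v)` is its least element. -/
def ordSet (ρ : BRep B) (v : B) : Set ℕ := {r : ℕ | ∀ i : ℕ, r + 1 ≤ i → ρ.d i v = 0}

/-- The action of `d_m` on the Virasoro module `N(B_(c), a) = B ⊗ ℂ[t, t⁻¹]`, realized on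
`ℤ →₀ B`:  `d_m · (w ⊗ t^j) = (Σ_{i≥1} (m^i/i!) d_{i-1} + mc + a + j) w ⊗ t^{m+j}`
(`c` is the twist of the `d₀`-action; `c = 0` gives `N(B, a)`). -/
noncomputable def Nact (ρ : BRep B) (a c : ℂ) (m : ℤ) (f : ℤ →₀ B) : ℤ →₀ B :=
  f.sum fun j w => Finsupp.single (m + j)
    ((∑ᶠ i : ℕ, (((m : ℂ) ^ (i + 1)) / (Nat.factorial (i + 1) : ℂ)) • ρ.d i w) +
      ((m : ℂ) * c + a + (j : ℂ)) • w)

end BRep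

/-- For a family `U : ℤ → Submodule ℂ W`, the subspace `⊕_j U j ⊗ t^j` of `W ⊗ ℂ[t,t⁻¹]`. -/
def gradedSub {W : Type*} [AddCommGroup W] [Module ℂ W] (U : ℤ → Submodule ℂ W) :
    Submodule ℂ (ℤ →₀ W) where
  carrier := {f | ∀ j, f j ∈ U j}
  add_mem' := fun hf hg j => by
    simpa only [Finsupp.add_apply] using (U j).add_mem (hf j) (hg j)
  zero_mem' := fun j => by simp
  smul_mem' := fun c f hf j => by
    simpa only [Finsupp.smul_apply] using (U j).smul_mem c (hf j)

/-- A submodule invariant under a (ℤ-indexed) family of operators. -/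
def ActInvariant {V : Type*} [AddCommGroup V] [Module ℂ V] (act : ℤ → V → V)
    (M : Submodule ℂ V) : Prop :=
  ∀ k : ℤ, ∀ u ∈ M, act k u ∈ M

/-- Simplicity of the module given by a family of operators (the central element acts by zero). -/
def ActSimple {V : Type*} [AddCommGroup V] [Module ℂ V] (act : ℤ → V → V) : Prop :=
  (∃ v : V, v ≠ 0) ∧ ∀ M : Submodule ℂ V, ActInvariant act M → M = ⊥ ∨ M = ⊤

/-- A representation of the Virasoro algebra. -/
structure VirasoroRep (V : Type*) [AddCommGroup V] [Module ℂ V] where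
  d : ℤ → V →ₗ[ℂ] V
  z : V →ₗ[ℂ] V
  comm : ∀ m n : ℤ, d m ∘ₗ d n - d n ∘ₗ d m =
    (((n - m : ℤ) : ℂ)) • d (m + n) +
      (if m + n = 0 then (((n : ℂ) ^ 3 - (n : ℂ)) / 12) else 0) • z
  comm_z : ∀ m : ℤ, d m ∘ₗ z = z ∘ₗ d m

/-!
An isomorphism `L(W, λ, a, b) ≅ L(W₀, λ₀, a₀, b₀)` preserves the eigenspaces of `d_0`, so the
normalization of `Re a` and `Re a₀` forces `a = a₀`, and the isomorphism splits into components
`Φ_j : W → W₀`.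

On each vector `d_{l-m} d_m` is a combination of `λ^m`, `λ^{-m}` and `1` with coefficients
polynomial in `m`. Simplicity excludes `λ = 1`. For a nonzero `w ∈ W`, let `N` be the least integer
with `d_i w = 0` for all `i ≥ N`, and put `u = d_{N-1} w`. When `λ ≠ ±1`, comparing the top
coefficients of the terms with base `λ` on the two sides gives `λ₀ = λ` or `λ₀ = λ⁻¹`, and `Φ_i u`
is constant in `i` in the first case and `λ₀^i Φ_0 u` in the second. When `λ = λ₀ = -1` these
comparisons only show that `Φ_i u` depends on the parity of `i`; a mixture of both behaviours would
make `W₀` a highest weight module of highest weight `b₀ - 1`, and then `L(W₀, -1, a, b₀)` is not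
simple.

In the constant case the vectors on which `Φ_i` is independent of `i` form a `𝔚`-submodule of `W`,
so `Φ_0` is an isomorphism of `𝔚`-modules. In the other case `u` and `Φ_0 u` are highest weight
vectors of weights `b₀ - 1` and `b - 1`.

Conversely, a nontrivial simple highest weight module is `ℂ[d_{-1}] w₀`, and the reflections
`f(X) ↦ λ^{-j} f(a + j - X)` of `ℂ[X]` exchange `(λ, b'₀ + 1)` and `(λ⁻¹, b' + 1)`.
-/

section PolynomialFunctions

open scoped fwdDiff

/-- Polynomial functions `ℤ → V`, as the functions annihilated by a power of the forward difference
operator `Δ`. This avoids choosing coefficients, and makes `β ^ m • f m` a generalized eigenvector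
of the shift operator. -/
def IsPolyFun {V : Type*} [AddCommGroup V] (f : ℤ → V) : Prop :=
  ∃ n : ℕ, Δ_[1] ^[n] f = 0

/-- `f` is a polynomial function of degree at most `N` with coefficient `v` (possibly `0`) in
degree `N`, encoded as `Δ ^ N f = N! v`. -/
def HasTopCoeff {V : Type*} [AddCommGroup V] (N : ℕ) (v : V) (f : ℤ → V) : Prop :=
  Δ_[1] ^[N] f = fun _ => N.factorial • v

variable {K V V' : Type*} [Field K] [AddCommGroup V] [Module K V] [AddCommGroup V'] [Module K V']

lemma map_fwdDiff_iter (T : V →+ V') (f : ℤ → V) (n : ℕ) (m : ℤ) :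
    Δ_[1] ^[n] (fun k => T (f k)) m = T (Δ_[1] ^[n] f m) := by
  induction n generalizing m with
  | zero => rfl
  | succ n ih => simp only [Function.iterate_succ_apply', fwdDiff, ih, map_sub]

lemma fwdDiff_iter_affine_smul (α c : K) (f : ℤ → V) (n : ℕ) (m : ℤ) :
    Δ_[1] ^[n + 1] (fun k : ℤ => (α + c * k) • f k) m =
      (α + c * m) • Δ_[1] ^[n + 1] f m + ((n + 1 : ℕ) * c) • Δ_[1] ^[n] f (m + 1) := by
  induction n generalizing m with
  | zero =>
    simp only [zero_add, Function.iterate_one, Function.iterate_zero, id, fwdDiff]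
    push_cast
    module
  | succ n ih =>
    rw [Function.iterate_succ_apply', fwdDiff, ih, ih, Function.iterate_succ_apply' _ (n + 1),
      fwdDiff, Function.iterate_succ_apply' _ n, fwdDiff]
    push_cast
    module

lemma fwdDiff_iter_const_zero (n : ℕ) : Δ_[1] ^[n] (fun _ : ℤ => (0 : V)) = fun _ => 0 := by
  induction n with
  | zero => rfl
  | succ n ih => rw [Function.iterate_succ_apply, fwdDiff_const, ih]

namespace HasTopCoeff

lemma zero (N : ℕ) : HasTopCoeff N (0 : V) fun _ => 0 := by
  simp only [HasTopCoeff, smul_zero, fwdDiff_iter_const_zero]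

lemma const (v : V) : HasTopCoeff 0 v fun _ => v := by
  simp [HasTopCoeff]

lemma add {N : ℕ} {v w : V} {f g : ℤ → V} (hf : HasTopCoeff N v f) (hg : HasTopCoeff N w g) :
    HasTopCoeff N (v + w) fun m => f m + g m := by
  change Δ_[1] ^[N] (f + g) = _
  rw [fwdDiff_iter_add, hf, hg]
  simp only [smul_add]
  rfl

lemma map {N : ℕ} {v : V} {f : ℤ → V} (T : V →+ V') (hf : HasTopCoeff N v f) :
    HasTopCoeff N (T v) fun m => T (f m) := by
  funext m
  rw [map_fwdDiff_iter, hf, map_nsmul]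

lemma affine_smul {N : ℕ} {v : V} {f : ℤ → V} (hf : HasTopCoeff N v f) (α c : K) :
    HasTopCoeff (N + 1) (c • v) fun m : ℤ => (α + c * m) • f m := by
  funext m
  rw [fwdDiff_iter_affine_smul, Function.iterate_succ_apply', hf, fwdDiff, sub_self, smul_zero,
    zero_add, Nat.factorial_succ, ← Nat.cast_smul_eq_nsmul K, ← Nat.cast_smul_eq_nsmul K,
    smul_smul, smul_smul]
  push_cast
  congr 1
  ring

lemma affine_pow_smul (α c : K) (v : V) (N : ℕ) :
    HasTopCoeff N (c ^ N • v) fun m : ℤ => (α + c * m) ^ N • v := by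
  induction N with
  | zero => simpa using const v
  | succ N ih => simpa only [pow_succ', mul_smul] using ih.affine_smul α c

lemma raise {N M : ℕ} {v : V} {f : ℤ → V} (hf : HasTopCoeff N v f) (h : N < M) :
    HasTopCoeff M 0 f := by
  obtain ⟨r, rfl⟩ := Nat.exists_eq_add_of_lt h
  rw [HasTopCoeff, show N + r + 1 = r + 1 + N by ring, Function.iterate_add_apply, hf,
    Function.iterate_succ_apply, fwdDiff_const, fwdDiff_iter_const_zero]
  simp only [smul_zero]

lemma sum_lower (N : ℕ) {f : ℕ → ℤ → V} {v : ℕ → V} (hf : ∀ i < N, HasTopCoeff i (v i) (f i)) :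
    HasTopCoeff N 0 fun m => ∑ i ∈ Finset.range N, f i m := by
  have hsum : ∀ M ≤ N, HasTopCoeff N 0 fun m => ∑ i ∈ Finset.range M, f i m := by
    intro M hM
    induction M with
    | zero => simpa using zero N
    | succ M ih =>
      simpa only [Finset.sum_range_succ, add_zero] using (ih (by omega)).add ((hf M hM).raise hM)
  exact hsum N le_rfl

lemma isPolyFun {N : ℕ} {v : V} {f : ℤ → V} (hf : HasTopCoeff N v f) : IsPolyFun f :=
  ⟨N + 1, (hf.raise N.lt_succ_self).trans (by simp only [smul_zero]; rfl)⟩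

end HasTopCoeff

namespace IsPolyFun

lemma const (v : V) : IsPolyFun fun _ => v := (HasTopCoeff.const v).isPolyFun

lemma fwdDiff_iter_eq_zero_of_le {f : ℤ → V} {n k : ℕ} (h : Δ_[1] ^[n] f = 0) (hk : n ≤ k) :
    Δ_[1] ^[k] f = 0 := by
  obtain ⟨r, rfl⟩ := Nat.exists_eq_add_of_le' hk
  rw [Function.iterate_add_apply, h]
  exact fwdDiff_iter_const_zero r

lemma add {f g : ℤ → V} (hf : IsPolyFun f) (hg : IsPolyFun g) :
    IsPolyFun fun m => f m + g m := by
  obtain ⟨n, hn⟩ := hf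
  obtain ⟨k, hk⟩ := hg
  refine ⟨max n k, ?_⟩
  change Δ_[1] ^[_] (f + g) = 0
  rw [fwdDiff_iter_add, fwdDiff_iter_eq_zero_of_le hn (le_max_left n k),
    fwdDiff_iter_eq_zero_of_le hk (le_max_right n k), add_zero]

lemma sum {ι : Type*} (s : Finset ι) {f : ι → ℤ → V} (hf : ∀ i, IsPolyFun (f i)) :
    IsPolyFun fun m => ∑ i ∈ s, f i m := by
  classical
  induction s using Finset.induction_on with
  | empty => simpa using const (0 : V)
  | insert i s hi ih => simpa only [Finset.sum_insert hi] using (hf i).add ih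

lemma map {f : ℤ → V} (T : V →+ V') (hf : IsPolyFun f) : IsPolyFun fun m => T (f m) := by
  obtain ⟨n, hn⟩ := hf
  exact ⟨n, funext fun m => by rw [map_fwdDiff_iter, hn, Pi.zero_apply, map_zero, Pi.zero_apply]⟩

lemma affine_smul {f : ℤ → V} (hf : IsPolyFun f) (α c : K) :
    IsPolyFun fun m : ℤ => (α + c * m) • f m := by
  obtain ⟨n, hn⟩ := hf
  refine ⟨n + 1, funext fun m => ?_⟩
  rw [fwdDiff_iter_affine_smul, fwdDiff_iter_eq_zero_of_le hn n.le_succ, hn]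
  simp

end IsPolyFun

variable [CharZero K]

lemma HasTopCoeff.unique (K : Type*) [Field K] [CharZero K] [Module K V] {N : ℕ} {v w : V}
    {f : ℤ → V} (hv : HasTopCoeff N v f) (hw : HasTopCoeff N w f) : v = w := by
  have h : N.factorial • v = N.factorial • w := congrFun (hv.symm.trans hw) 0
  rw [← Nat.cast_smul_eq_nsmul K, ← Nat.cast_smul_eq_nsmul K] at h
  exact smul_right_injective V (Nat.cast_ne_zero.2 N.factorial_ne_zero) h

lemma eq_zero_of_forall_sum_intCast_pow_smul_eq_zero (n : ℕ) (c : ℕ → V)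
    (h : ∀ m : ℤ, ∑ i ∈ Finset.range n, (m : K) ^ i • c i = 0) : ∀ i < n, c i = 0 := by
  induction n with
  | zero => simp
  | succ n ih =>
    have hlow : HasTopCoeff n (0 : V) fun m : ℤ => ∑ i ∈ Finset.range n, (m : K) ^ i • c i :=
      HasTopCoeff.sum_lower n fun i _ => by
        simpa using HasTopCoeff.affine_pow_smul (0 : K) 1 (c i) i
    have htop : HasTopCoeff n (c n) fun m : ℤ => (m : K) ^ n • c n := by
      simpa using HasTopCoeff.affine_pow_smul (0 : K) 1 (c n) n
    have hn : c n = 0 := by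
      simp only [Finset.sum_range_succ] at h
      have := hlow.add htop
      simp only [h, zero_add] at this
      exact this.unique K (HasTopCoeff.zero n)
    simp only [Finset.sum_range_succ, hn, smul_zero, add_zero] at h
    intro i hi
    rcases Nat.lt_succ_iff_lt_or_eq.1 hi with hlt | rfl
    exacts [ih h i hlt, hn]

end PolynomialFunctions

section ExponentialPolynomials

open scoped fwdDiff

variable (K V : Type*) {V' : Type*} [Field K] [AddCommGroup V] [Module K V] [AddCommGroup V']
  [Module K V']

/-- The shift `f ↦ f (· + 1)` on functions `ℤ → V`. Its generalized eigenvectors of eigenvalue `β`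
are the functions `m ↦ β ^ m • f m` with `f` polynomial. -/
def shiftEnd : Module.End K (ℤ → V) := LinearMap.funLeft K V (· + 1)

variable {V}

/-- The span of the exponential polynomials `m ↦ γ ^ m • f m` with `γ ≠ β`. -/
def expPolyAwayFrom (β : K) : Submodule K (ℤ → V) :=
  ⨆ γ ≠ β, (shiftEnd K V).maxGenEigenspace γ

variable {K}

/-- The exponential polynomial `F` has at the exponential `β ^ m` a polynomial factor of degree at
most `N`, whose coefficient in degree `N` is `v` (possibly `0`). -/
def HasExpTopCoeff (β : K) (N : ℕ) (v : V) (F : ℤ → V) : Prop :=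
  ∃ f : ℤ → V, HasTopCoeff N v f ∧ (fun m => F m - β ^ m • f m) ∈ expPolyAwayFrom K β

lemma shiftEnd_sub_smul_pow_zpow_smul {β : K} (hβ : β ≠ 0) (f : ℤ → V) (n : ℕ) (m : ℤ) :
    ((shiftEnd K V - β • 1) ^ n) (fun m => β ^ m • f m) m = β ^ (m + n) • Δ_[1] ^[n] f m := by
  induction n generalizing m with
  | zero => simp
  | succ n ih =>
    rw [pow_succ', Module.End.mul_apply, Function.iterate_succ_apply', fwdDiff]
    change ((shiftEnd K V - β • 1) ^ n) _ (m + 1) - β • ((shiftEnd K V - β • 1) ^ n) _ m = _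
    rw [ih, ih, smul_smul, smul_sub, Nat.cast_succ, show m + 1 + (n : ℤ) = m + (n + 1) by ring,
      ← add_assoc, zpow_add_one₀ hβ, mul_comm β]

lemma zpow_smul_mem_maxGenEigenspace {β : K} (hβ : β ≠ 0) {f : ℤ → V} (hf : IsPolyFun f) :
    (fun m => β ^ m • f m) ∈ (shiftEnd K V).maxGenEigenspace β := by
  obtain ⟨n, hn⟩ := hf
  refine Module.End.mem_maxGenEigenspace _ _ _ |>.2 ⟨n, funext fun m => ?_⟩
  rw [shiftEnd_sub_smul_pow_zpow_smul hβ, hn]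
  simp

lemma comp_mem_maxGenEigenspace (T : V →ₗ[K] V') {β : K} {F : ℤ → V}
    (hF : F ∈ (shiftEnd K V).maxGenEigenspace β) :
    (fun m => T (F m)) ∈ (shiftEnd K V').maxGenEigenspace β := by
  obtain ⟨n, hn⟩ := (Module.End.mem_maxGenEigenspace _ _ _).1 hF
  have hcomm : (shiftEnd K V' - β • 1) ∘ₗ T.compLeft ℤ =
      T.compLeft ℤ ∘ₗ (shiftEnd K V - β • 1) :=
    LinearMap.ext fun G => funext fun m =>
      ((map_sub T _ _).trans (congrArg _ (map_smul T _ _))).symm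
  refine (Module.End.mem_maxGenEigenspace _ _ _).2 ⟨n, ?_⟩
  have := LinearMap.congr_fun (Module.End.commute_pow_left_of_commute hcomm n) F
  rw [LinearMap.comp_apply, LinearMap.comp_apply, hn, map_zero] at this
  exact this

lemma comp_mem_expPolyAwayFrom (T : V →ₗ[K] V') {β : K} {F : ℤ → V}
    (hF : F ∈ expPolyAwayFrom K β) : (fun m => T (F m)) ∈ expPolyAwayFrom K β := by
  have hle : expPolyAwayFrom K β ≤ (expPolyAwayFrom K β).comap (T.compLeft ℤ) :=
    iSup₂_le fun γ hγ G hG =>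
      Submodule.mem_iSup_of_mem γ (Submodule.mem_iSup_of_mem hγ (comp_mem_maxGenEigenspace T hG))
  exact hle hF

lemma zpow_smul_mem_expPolyAwayFrom {β γ : K} (hγ : γ ≠ 0) (hγβ : γ ≠ β) {f : ℤ → V}
    (hf : IsPolyFun f) : (fun m => γ ^ m • f m) ∈ expPolyAwayFrom K β :=
  Submodule.mem_iSup_of_mem γ <| Submodule.mem_iSup_of_mem hγβ <|
    zpow_smul_mem_maxGenEigenspace hγ hf

lemma eq_zero_of_zpow_smul_mem_expPolyAwayFrom {β : K} (hβ : β ≠ 0) {f : ℤ → V}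
    (hf : IsPolyFun f) (h : (fun m => β ^ m • f m) ∈ expPolyAwayFrom K β) (m : ℤ) : f m = 0 := by
  have h0 := Submodule.disjoint_def.1 ((shiftEnd K V).independent_maxGenEigenspace β) _
    (zpow_smul_mem_maxGenEigenspace hβ hf) h
  exact (smul_eq_zero.1 (congrFun h0 m)).resolve_left (zpow_ne_zero m hβ)

namespace HasExpTopCoeff

variable {β : K} {N : ℕ} {v w : V} {F G : ℤ → V}

lemma zpow_smul {f : ℤ → V} (hf : HasTopCoeff N v f) {γ : K} [Decidable (γ = β)]
    (hγ : γ ≠ 0) : HasExpTopCoeff β N (if γ = β then v else 0) fun m => γ ^ m • f m := by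
  split_ifs with h
  · exact ⟨f, hf, by simpa only [h, sub_self] using! zero_mem _⟩
  · exact ⟨fun _ => 0, HasTopCoeff.zero N, by
      simpa only [smul_zero, sub_zero] using zpow_smul_mem_expPolyAwayFrom hγ h hf.isPolyFun⟩

lemma of_isPolyFun (hβ : β ≠ 1) (hF : IsPolyFun F) : HasExpTopCoeff β N 0 F :=
  ⟨fun _ => 0, HasTopCoeff.zero N, by
    simpa only [smul_zero, sub_zero, one_zpow, one_smul] using
      zpow_smul_mem_expPolyAwayFrom one_ne_zero hβ.symm hF⟩

lemma add (hF : HasExpTopCoeff β N v F) (hG : HasExpTopCoeff β N w G) :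
    HasExpTopCoeff β N (v + w) fun m => F m + G m := by
  obtain ⟨f, hf, hFf⟩ := hF
  obtain ⟨g, hg, hGg⟩ := hG
  exact ⟨_, hf.add hg, by simpa only [smul_add, add_sub_add_comm] using! add_mem hFf hGg⟩

lemma map (T : V →ₗ[K] V') (hF : HasExpTopCoeff β N v F) :
    HasExpTopCoeff β N (T v) fun m => T (F m) := by
  obtain ⟨f, hf, hFf⟩ := hF
  exact ⟨_, hf.map T.toAddMonoidHom, by
    simpa only [map_sub, map_smul] using! comp_mem_expPolyAwayFrom T hFf⟩

lemma unique [CharZero K] (hβ : β ≠ 0) (hv : HasExpTopCoeff β N v F)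
    (hw : HasExpTopCoeff β N w F) : v = w := by
  obtain ⟨f, hf, hFf⟩ := hv
  obtain ⟨g, hg, hFg⟩ := hw
  have hfg : IsPolyFun fun m => f m + (-1 : ℤ) • g m :=
    hf.isPolyFun.add (hg.isPolyFun.map (zsmulAddGroupHom (-1)))
  have hmem : (fun m => β ^ m • (f m + (-1 : ℤ) • g m)) ∈ expPolyAwayFrom K β := by
    convert sub_mem hFg hFf using 1
    funext m
    simp only [Pi.sub_apply]
    module
  have hEq : f = g := funext fun m => by
    have := eq_zero_of_zpow_smul_mem_expPolyAwayFrom hβ hfg hmem m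
    rwa [neg_one_smul, ← sub_eq_add_neg, sub_eq_zero] at this
  exact hf.unique K (hEq ▸ hg)

end HasExpTopCoeff

end ExponentialPolynomials

namespace WittRep

variable {W W₀ V : Type*} [AddCommGroup W] [Module ℂ W] [AddCommGroup W₀] [Module ℂ W₀]
  [AddCommGroup V] [Module ℂ V]

section Order

variable (ρ : WittRep W)

/-- The coefficient `d_{i-1} / i!` of `k ^ i` in `e^{kt} d/dt`. -/
noncomputable def expCoeff (i : ℕ) : W →ₗ[ℂ] W := (i.factorial : ℂ)⁻¹ • ρ.d ((i : ℤ) - 1)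

/-- The space of vectors annihilated by all `d_i` with `i ≥ n`. The spaces with `n ∈ ℕ` filter a
module in `O_𝔚`. -/
def annihilatedFrom (n : ℤ) : Submodule ℂ W := ⨅ i : {i : ℤ // n ≤ i}, LinearMap.ker (ρ.d i)

/-- `N` is the order of `w`: the least `N ∈ ℕ` with `d_i w = 0` for all `i ≥ N`. For `N = 0` the
condition `d_{N-1} w ≠ 0` still asks for something, namely `d_{-1} w ≠ 0`. -/
def HasOrder (N : ℕ) (w : W) : Prop := w ∈ ρ.annihilatedFrom N ∧ ρ.d ((N : ℤ) - 1) w ≠ 0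

variable {ρ}

lemma mem_annihilatedFrom {n : ℤ} {w : W} :
    w ∈ ρ.annihilatedFrom n ↔ ∀ i : ℤ, n ≤ i → ρ.d i w = 0 := by
  simp [annihilatedFrom, Submodule.mem_iInf]

lemma annihilatedFrom_mono {n m : ℤ} (h : n ≤ m) :
    ρ.annihilatedFrom n ≤ ρ.annihilatedFrom m := fun _ hw =>
  mem_annihilatedFrom.2 fun i hi => mem_annihilatedFrom.1 hw i (h.trans hi)

lemma InO.exists_mem_annihilatedFrom (hO : ρ.InO) (w : W) :
    ∃ n : ℕ, w ∈ ρ.annihilatedFrom n :=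
  (hO w).imp fun _ => mem_annihilatedFrom.2

lemma d_eq_smul_expCoeff (i : ℕ) (w : W) :
    ρ.d ((i : ℤ) - 1) w = (i.factorial : ℂ) • ρ.expCoeff i w := by
  simp [expCoeff, smul_smul, Nat.factorial_ne_zero]

lemma expCoeff_zero : ρ.expCoeff 0 = ρ.d (-1) := by simp [expCoeff]

lemma expCoeff_one : ρ.expCoeff 1 = ρ.d 0 := by simp [expCoeff]

lemma expCoeff_eq_zero_of_mem_annihilatedFrom {n : ℤ} {w : W} (hw : w ∈ ρ.annihilatedFrom n)
    {i : ℕ} (hi : n < i) : ρ.expCoeff i w = 0 := by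
  rw [expCoeff, LinearMap.smul_apply, mem_annihilatedFrom.1 hw _ (by omega), smul_zero]

lemma d_d_apply (ρ : WittRep W) {m n : ℤ} (hm : -1 ≤ m) (hn : -1 ≤ n) (w : W) :
    ρ.d m (ρ.d n w) = ρ.d n (ρ.d m w) + ((n - m : ℤ) : ℂ) • ρ.d (m + n) w :=
  sub_eq_iff_eq_add'.1 (LinearMap.congr_fun (ρ.comm m n hm hn) w)

lemma d_mem_annihilatedFrom {n r i : ℤ} (hn : -1 ≤ n) (hi : -1 ≤ i) (hr : n ≤ r)
    (hri : n ≤ r + i) {w : W} (hw : w ∈ ρ.annihilatedFrom n) :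
    ρ.d i w ∈ ρ.annihilatedFrom r := by
  rw [mem_annihilatedFrom] at hw ⊢
  intro m hm
  rw [ρ.d_d_apply (by omega) hi, hw m (by omega), hw _ (by omega), map_zero, smul_zero, add_zero]

lemma expCoeff_succ_d_neg_one (i : ℕ) (w : W) :
    ρ.expCoeff (i + 1) (ρ.d (-1) w) = ρ.d (-1) (ρ.expCoeff (i + 1) w) - ρ.expCoeff i w := by
  have hbracket : ρ.d i (ρ.d (-1) w) =
      ρ.d (-1) (ρ.d i w) + (-1 - i : ℂ) • ρ.d ((i : ℤ) - 1) w := by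
    simpa [← sub_eq_add_neg] using ρ.d_d_apply (m := i) (by omega) le_rfl w
  have hfac : ((i + 1).factorial : ℂ) = (i + 1) * i.factorial := by
    exact_mod_cast i.factorial_succ
  have hi : (i + 1 : ℂ) ≠ 0 := by exact_mod_cast i.succ_ne_zero
  have hif : (i.factorial : ℂ) ≠ 0 := by exact_mod_cast i.factorial_ne_zero
  simp only [expCoeff, LinearMap.smul_apply, map_smul, Nat.cast_succ, add_sub_cancel_right,
    hbracket, hfac, smul_add, smul_smul, sub_eq_add_neg _ ((i.factorial : ℂ)⁻¹ • _)]
  rw [← neg_smul]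
  congr 2
  field_simp
  ring

namespace HasOrder

variable {N M : ℕ} {w : W}

lemma expCoeff_ne_zero (h : ρ.HasOrder N w) : ρ.expCoeff N w ≠ 0 := fun h0 =>
  h.2 (by rw [d_eq_smul_expCoeff, h0, smul_zero])

lemma ne_zero (h : ρ.HasOrder N w) : w ≠ 0 := by
  rintro rfl
  exact h.2 (map_zero _)

lemma le_of_mem_annihilatedFrom (h : ρ.HasOrder N w) (hw : w ∈ ρ.annihilatedFrom M) : N ≤ M := by
  by_contra! hlt
  exact h.2 (mem_annihilatedFrom.1 hw _ (by omega))

lemma d_neg_one_sub_smul (h : ρ.HasOrder N w) (c : ℂ) :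
    ρ.HasOrder (N + 1) (ρ.d (-1) w - c • w) := by
  refine ⟨sub_mem (d_mem_annihilatedFrom (n := N) (by omega) le_rfl (by simp) (by simp) h.1)
    (Submodule.smul_mem _ _ (annihilatedFrom_mono (by simp) h.1)), ?_⟩
  have hN : ρ.expCoeff (N + 1) (ρ.d (-1) w - c • w) = -ρ.expCoeff N w := by
    rw [map_sub, map_smul, expCoeff_succ_d_neg_one,
      expCoeff_eq_zero_of_mem_annihilatedFrom h.1 (by simp), map_zero, zero_sub, smul_zero,
      sub_zero]
  rw [d_eq_smul_expCoeff, hN]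
  exact smul_ne_zero (by exact_mod_cast (N + 1).factorial_ne_zero)
    (neg_ne_zero.2 h.expCoeff_ne_zero)

end HasOrder

lemma annihilatedFrom_neg_one_eq_bot (hnt : ¬ ρ.IsTrivial) (hs : ρ.IsSimple) :
    ρ.annihilatedFrom (-1) = ⊥ := by
  refine (hs.2 _ fun i hi u hu => ?_).resolve_right fun htop => ?_
  · rw [mem_annihilatedFrom.1 hu i hi]
    exact zero_mem _
  · exact hnt fun i hi => LinearMap.ext fun u =>
      mem_annihilatedFrom.1 (htop ▸ Submodule.mem_top) i hi

lemma exists_hasOrder (hO : ρ.InO) (hnt : ¬ ρ.IsTrivial) (hs : ρ.IsSimple) {w : W} (hw : w ≠ 0) :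
    ∃ N, ρ.HasOrder N w := by
  obtain ⟨n, hn⟩ := hO.exists_mem_annihilatedFrom w
  obtain ⟨N, hN, hN1⟩ := Nat.exists_not_and_succ_of_not_zero_of_exists
    (p := fun n : ℕ => w ∈ ρ.annihilatedFrom ((n : ℤ) - 1))
    (by simpa [annihilatedFrom_neg_one_eq_bot hnt hs] using hw)
    ⟨n + 1, by simpa using hn⟩
  simp only [Nat.cast_succ, add_sub_cancel_right] at hN1
  refine ⟨N, hN1, fun h0 => hN (mem_annihilatedFrom.2 fun i hi => ?_)⟩
  rcases hi.eq_or_lt with rfl | hlt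
  exacts [h0, mem_annihilatedFrom.1 hN1 i (by omega)]

end Order

section Exponential

variable {ρ : WittRep W} {ρ₀ : WittRep W₀}

lemma E_eq_sum {n : ℕ} {w : W} (hw : w ∈ ρ.annihilatedFrom n) (k : ℤ) :
    ρ.E k w = ∑ i ∈ Finset.range (n + 1), (k : ℂ) ^ i • ρ.expCoeff i w := by
  have hE : ρ.E k w = ∑ᶠ i : ℕ, (k : ℂ) ^ i • ρ.expCoeff i w :=
    finsum_congr fun i => by rw [expCoeff, LinearMap.smul_apply, smul_smul, div_eq_mul_inv]
  rw [hE]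
  refine finsum_eq_finsetSum_of_support_subset _ fun i hi => ?_
  by_contra hni
  refine hi ?_
  dsimp only
  rw [expCoeff_eq_zero_of_mem_annihilatedFrom hw (by simpa [Nat.lt_succ_iff] using hni), smul_zero]

/-- `e^{kt} d/dt` as a linear map. -/
noncomputable def ELin (ρ : WittRep W) (hO : ρ.InO) (k : ℤ) : W →ₗ[ℂ] W where
  toFun := ρ.E k
  map_add' w u := by
    obtain ⟨n, hw⟩ := hO.exists_mem_annihilatedFrom w
    obtain ⟨m, hu⟩ := hO.exists_mem_annihilatedFrom u
    replace hw := annihilatedFrom_mono (Nat.cast_le.2 (le_max_left n m)) hw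
    replace hu := annihilatedFrom_mono (Nat.cast_le.2 (le_max_right n m)) hu
    simp only [E_eq_sum hw, E_eq_sum hu, E_eq_sum (add_mem hw hu), map_add, smul_add,
      Finset.sum_add_distrib]
  map_smul' c w := by
    obtain ⟨n, hw⟩ := hO.exists_mem_annihilatedFrom w
    simp only [E_eq_sum hw, E_eq_sum (Submodule.smul_mem _ c hw), map_smul, Finset.smul_sum,
      smul_comm c, RingHom.id_apply]

lemma ELin_apply (hO : ρ.InO) (k : ℤ) (w : W) : ρ.ELin hO k w = ρ.E k w := rfl

lemma E_zero (hO : ρ.InO) (w : W) : ρ.E 0 w = ρ.d (-1) w := by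
  obtain ⟨n, hn⟩ := hO.exists_mem_annihilatedFrom w
  rw [E_eq_sum hn, Finset.sum_range_succ']
  simp [expCoeff_zero]

lemma E_d_neg_one (hO : ρ.InO) (k : ℤ) (w : W) :
    ρ.E k (ρ.d (-1) w) = ρ.d (-1) (ρ.E k w) - (k : ℂ) • ρ.E k w := by
  obtain ⟨n, hn⟩ := hO.exists_mem_annihilatedFrom w
  have hn' : w ∈ ρ.annihilatedFrom (n + 1 : ℕ) := annihilatedFrom_mono (by simp) hn
  have hD : ρ.d (-1) w ∈ ρ.annihilatedFrom (n + 1 : ℕ) :=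
    d_mem_annihilatedFrom (n := n) (by omega) le_rfl (by simp) (by simp) hn
  calc ρ.E k (ρ.d (-1) w)
      = ∑ i ∈ Finset.range (n + 1), ((k : ℂ) ^ (i + 1) • ρ.d (-1) (ρ.expCoeff (i + 1) w) -
          (k : ℂ) • (k : ℂ) ^ i • ρ.expCoeff i w) + ρ.d (-1) (ρ.d (-1) w) := by
        rw [E_eq_sum hD, Finset.sum_range_succ']
        simp only [expCoeff_succ_d_neg_one, expCoeff_zero, smul_sub, smul_smul, pow_succ', pow_zero,
          one_smul]
    _ = ρ.d (-1) (∑ i ∈ Finset.range (n + 2), (k : ℂ) ^ i • ρ.expCoeff i w) -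
          (k : ℂ) • ∑ i ∈ Finset.range (n + 1), (k : ℂ) ^ i • ρ.expCoeff i w := by
        rw [Finset.sum_range_succ' _ (n + 1), Finset.sum_sub_distrib, Finset.smul_sum, map_add,
          map_sum]
        simp only [map_smul, expCoeff_zero, pow_zero, one_smul]
        abel
    _ = ρ.d (-1) (ρ.E k w) - (k : ℂ) • ρ.E k w := by rw [← E_eq_sum hn', ← E_eq_sum hn]

lemma isPolyFun_E (hO : ρ.InO) (α c : ℤ) (w : W) : IsPolyFun fun m : ℤ => ρ.E (α + c * m) w := by
  obtain ⟨n, hn⟩ := hO.exists_mem_annihilatedFrom w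
  simp only [E_eq_sum hn, Int.cast_add, Int.cast_mul]
  exact IsPolyFun.sum _ fun i =>
    (HasTopCoeff.affine_pow_smul (α : ℂ) c (ρ.expCoeff i w) i).isPolyFun

lemma hasTopCoeff_E {N : ℕ} {w : W} (hw : w ∈ ρ.annihilatedFrom N) (α c : ℤ) :
    HasTopCoeff N ((c : ℂ) ^ N • ρ.expCoeff N w) fun m : ℤ => ρ.E (α + c * m) w := by
  simp only [E_eq_sum hw, Int.cast_add, Int.cast_mul, Finset.sum_range_succ]
  rw [← zero_add ((c : ℂ) ^ N • _)]
  exact (HasTopCoeff.sum_lower N fun i _ => HasTopCoeff.affine_pow_smul (α : ℂ) c _ i).add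
    (HasTopCoeff.affine_pow_smul _ _ _ N)

lemma map_expCoeff_eq_of_forall_map_E (hO : ρ.InO) (T : W →ₗ[ℂ] V) (w : W) {n : ℕ} (c : ℕ → V)
    (hc : ∀ i, n ≤ i → c i = 0)
    (h : ∀ k : ℤ, T (ρ.E k w) = ∑ i ∈ Finset.range n, (k : ℂ) ^ i • c i) (i : ℕ) :
    T (ρ.expCoeff i w) = c i := by
  obtain ⟨r, hr⟩ := hO.exists_mem_annihilatedFrom w
  have hw : w ∈ ρ.annihilatedFrom (max i (max r n) : ℕ) := annihilatedFrom_mono (by simp) hr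
  set N := max i (max r n)
  refine sub_eq_zero.1 (eq_zero_of_forall_sum_intCast_pow_smul_eq_zero (K := ℂ) (N + 1)
    (fun i => T (ρ.expCoeff i w) - c i) (fun k => ?_) i (by omega))
  have hext : ∑ i ∈ Finset.range n, (k : ℂ) ^ i • c i =
      ∑ i ∈ Finset.range (N + 1), (k : ℂ) ^ i • c i :=
    Finset.sum_subset (Finset.range_subset_range.2 (by omega)) fun i _ hi => by
      rw [hc i (by simpa using hi), smul_zero]
  simpa only [E_eq_sum hw, map_sum, map_smul, hext, ← sub_eq_zero (a := ∑ _ ∈ _, _),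
    ← Finset.sum_sub_distrib, ← smul_sub] using h k

lemma map_d_eq_of_forall_map_E_eq (hO : ρ.InO) (hO₀ : ρ₀.InO) (T : W →ₗ[ℂ] V) (T₀ : W₀ →ₗ[ℂ] V)
    (w : W) (v : W₀) (h : ∀ k : ℤ, T (ρ.E k w) = T₀ (ρ₀.E k v)) {i : ℤ} (hi : -1 ≤ i) :
    T (ρ.d i w) = T₀ (ρ₀.d i v) := by
  obtain ⟨n, hn⟩ := hO₀.exists_mem_annihilatedFrom v
  obtain ⟨j, rfl⟩ : ∃ j : ℕ, i = (j : ℤ) - 1 := ⟨(i + 1).toNat, by omega⟩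
  have hcoeff := map_expCoeff_eq_of_forall_map_E hO T w (n := n + 1)
    (fun i => T₀ (ρ₀.expCoeff i v))
    (fun i hi => by
      rw [expCoeff_eq_zero_of_mem_annihilatedFrom hn (by exact_mod_cast hi), map_zero])
    (fun k => by rw [h, E_eq_sum hn, map_sum]; simp only [map_smul])
  rw [d_eq_smul_expCoeff, d_eq_smul_expCoeff, map_smul, map_smul, hcoeff]

lemma d_eq_of_forall_E_eq_affine (hO : ρ.InO) (w A B : W)
    (h : ∀ k : ℤ, ρ.E k w = A + (k : ℂ) • B) : ρ.d 0 w = B ∧ ∀ i : ℤ, 1 ≤ i → ρ.d i w = 0 := by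
  have hcoeff := map_expCoeff_eq_of_forall_map_E hO LinearMap.id w (n := 2)
    (fun i => if i = 0 then A else if i = 1 then B else 0)
    (fun i hi => by rw [if_neg (by omega), if_neg (by omega)])
    (fun k => by simpa [Finset.sum_range_succ] using h k)
  refine ⟨by simpa [expCoeff_one] using hcoeff 1, fun i hi => ?_⟩
  obtain ⟨j, rfl⟩ : ∃ j : ℕ, i = (j : ℤ) - 1 := ⟨(i + 1).toNat, by omega⟩
  rw [d_eq_smul_expCoeff, ← LinearMap.id_apply (R := ℂ) (ρ.expCoeff j w), hcoeff,
    if_neg (by omega), if_neg (by omega), smul_zero]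

lemma map_E (ψ : W ≃ₗ[ℂ] W₀) (hψ : ∀ i : ℤ, -1 ≤ i → ∀ w : W, ψ (ρ.d i w) = ρ₀.d i (ψ w))
    (hO : ρ.InO) (k : ℤ) (w : W) : ψ (ρ.E k w) = ρ₀.E k (ψ w) := by
  obtain ⟨n, hn⟩ := hO.exists_mem_annihilatedFrom w
  have hn₀ : ψ w ∈ ρ₀.annihilatedFrom n := mem_annihilatedFrom.2 fun i hi => by
    rw [← hψ i (by omega), mem_annihilatedFrom.1 hn i hi, map_zero]
  simp only [E_eq_sum hn, E_eq_sum hn₀, map_sum, map_smul, expCoeff, LinearMap.smul_apply]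
  exact Finset.sum_congr rfl fun i _ => by rw [hψ _ (by omega)]

end Exponential

section Graded

variable {ρ : WittRep W} {ρ₀ : WittRep W₀} (hO : ρ.InO) (hO₀ : ρ₀.InO) {lam lam₀ a a₀ b b₀ : ℂ}

/-- The operator `W ⊗ t^j → W ⊗ t^{k+j}` by which `d_k` acts on `L(W, λ, a, b)`. -/
noncomputable def degAct (ρ : WittRep W) (hO : ρ.InO) (lam a b : ℂ) (k j : ℤ) : W →ₗ[ℂ] W :=
  lam ^ k • ρ.ELin hO k - ρ.d (-1) + (a + k * b + j) • LinearMap.id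

lemma degAct_apply (lam a b : ℂ) (k j : ℤ) (w : W) :
    ρ.degAct hO lam a b k j w = lam ^ k • ρ.E k w - ρ.d (-1) w + (a + k * b + j) • w :=
  rfl

lemma Lact_eq_lsum (lam a b : ℂ) (k : ℤ) (f : ℤ →₀ W) : ρ.Lact lam a b k f =
    Finsupp.lsum ℂ (fun j => Finsupp.lsingle (k + j) ∘ₗ ρ.degAct hO lam a b k j) f :=
  rfl

lemma Lact_single (lam a b : ℂ) (k j : ℤ) (w : W) : ρ.Lact lam a b k (Finsupp.single j w) =
    Finsupp.single (k + j) (ρ.degAct hO lam a b k j w) := by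
  simp [Lact_eq_lsum hO]

lemma Lact_apply (lam a b : ℂ) (k : ℤ) (f : ℤ →₀ W) (i : ℤ) :
    ρ.Lact lam a b k f i = ρ.degAct hO lam a b k (i - k) (f (i - k)) := by
  induction f using Finsupp.induction_linear with
  | zero => simp [Lact_eq_lsum hO]
  | add f g hf hg =>
    rw [Lact_eq_lsum hO, map_add, ← Lact_eq_lsum, ← Lact_eq_lsum, Finsupp.add_apply, hf, hg,
      Finsupp.add_apply, map_add]
  | single j w =>
    rw [Lact_single hO]
    rcases eq_or_ne (k + j) i with rfl | h
    · simp
    · rw [Finsupp.single_eq_of_ne h.symm, Finsupp.single_eq_of_ne (by omega), map_zero]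

lemma Lact_zero_apply (hO : ρ.InO) (lam a b : ℂ) (f : ℤ →₀ W) (i : ℤ) :
    ρ.Lact lam a b 0 f i = (a + i) • f i := by
  simp [Lact_apply hO, degAct_apply, E_zero hO]

section Simplicity

variable {hO}

lemma actSimple_of_equiv {V' : Type*} [AddCommGroup V'] [Module ℂ V'] {act : ℤ → V → V}
    {act' : ℤ → V' → V'} (φ : V ≃ₗ[ℂ] V') (hφ : ∀ k f, φ (act k f) = act' k (φ f))
    (h : ActSimple act) : ActSimple act' := by
  obtain ⟨v, hv⟩ := h.1
  refine ⟨⟨φ v, by simpa using hv⟩, fun M hM => ?_⟩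
  rw [← Submodule.map_comap_eq_of_surjective φ.surjective M]
  refine (h.2 (M.comap φ.toLinearMap) fun k u hu => ?_).imp (fun h => ?_) fun h => ?_
  · simpa [hφ] using hM k (φ u) hu
  · exact (congrArg (Submodule.map φ.toLinearMap) h).trans (Submodule.map_bot _)
  · exact (congrArg (Submodule.map φ.toLinearMap) h).trans
      ((Submodule.map_top _).trans (LinearEquiv.range φ))

lemma forall_eq_bot_or_forall_eq_top (hL : ActSimple (ρ.Lact lam a b)) (U : ℤ → Submodule ℂ W)
    (hU : ∀ k j : ℤ, ∀ w ∈ U j, ρ.degAct hO lam a b k j w ∈ U (k + j)) :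
    (∀ i, U i = ⊥) ∨ ∀ i, U i = ⊤ := by
  have hinv : ActInvariant (ρ.Lact lam a b) (gradedSub U) := fun k f hf i => by
    rw [Lact_apply hO]
    simpa using hU k (i - k) _ (hf (i - k))
  rcases hL.2 _ hinv with hbot | htop
  · refine Or.inl fun i => (Submodule.eq_bot_iff _).2 fun w hw => ?_
    have hmem : Finsupp.single i w ∈ gradedSub U := fun j => by
      rcases eq_or_ne i j with rfl | hij
      · simpa using hw
      · simp [Finsupp.single_eq_of_ne hij.symm]
    simpa [hbot] using hmem
  · refine Or.inr fun i => Submodule.eq_top_iff'.2 fun w => ?_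
    have hmem : Finsupp.single i w ∈ gradedSub U := htop ▸ Submodule.mem_top
    simpa using hmem i

lemma degAct_one_mem_annihilatedFrom {N : ℕ} (k j : ℤ) {w : W} (hw : w ∈ ρ.annihilatedFrom N) :
    ρ.degAct hO 1 a b k j w ∈ ρ.annihilatedFrom N := by
  rw [degAct_apply, E_eq_sum hw, Finset.sum_range_succ', one_zpow, one_smul, expCoeff_zero,
    pow_zero, one_smul, add_sub_cancel_right]
  refine add_mem (sum_mem fun i _ => ?_) (Submodule.smul_mem _ _ hw)
  exact Submodule.smul_mem _ _ (Submodule.smul_mem _ _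
    (d_mem_annihilatedFrom (n := N) (by omega) (by omega) le_rfl (by omega) hw))

lemma lam_ne_one_of_actSimple (hO : ρ.InO) (hnt : ¬ ρ.IsTrivial) (hs : ρ.IsSimple)
    (hL : ActSimple (ρ.Lact lam a b)) : lam ≠ 1 := by
  rintro rfl
  obtain ⟨w, hw⟩ := hs.1
  obtain ⟨N, hN⟩ := exists_hasOrder hO hnt hs hw
  rcases forall_eq_bot_or_forall_eq_top hL (fun _ => ρ.annihilatedFrom N)
    (fun k j _ => degAct_one_mem_annihilatedFrom (hO := hO) k j) with hbot | htop
  · exact hw ((Submodule.eq_bot_iff _).1 (hbot 0) w hN.1)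
  · have := (hN.d_neg_one_sub_smul 0).le_of_mem_annihilatedFrom (M := N)
      (htop 0 ▸ Submodule.mem_top)
    omega

lemma E_d_neg_one_sub_smul (hO : ρ.InO) (c : ℂ) (k : ℤ) (w : W) :
    ρ.E k (ρ.d (-1) w - c • w) = ρ.d (-1) (ρ.E k w) - (c + k) • ρ.E k w := by
  rw [← ELin_apply hO, map_sub, map_smul, ELin_apply, ELin_apply, E_d_neg_one hO]
  module

lemma degAct_b_one_mem_range (k j : ℤ) {w : W}
    (hw : w ∈ LinearMap.range (ρ.d (-1) - (a + j) • LinearMap.id)) :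
    ρ.degAct hO lam a 1 k j w ∈
      LinearMap.range (ρ.d (-1) - (a + (k + j : ℤ)) • LinearMap.id) := by
  obtain ⟨u, rfl⟩ := hw
  refine ⟨lam ^ k • ρ.E k u - (ρ.d (-1) u - (a + j) • u), ?_⟩
  simp only [LinearMap.sub_apply, LinearMap.smul_apply, LinearMap.id_apply]
  rw [degAct_apply, E_d_neg_one_sub_smul hO]
  simp only [map_sub, map_smul]
  push_cast
  module

lemma exists_notMem_range_d_neg_one_sub_smul (hO : ρ.InO) (hnt : ¬ ρ.IsTrivial) (hs : ρ.IsSimple)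
    (c : ℂ) : ∃ w, w ∉ LinearMap.range (ρ.d (-1) - c • LinearMap.id) := by
  classical
  have hex : ∃ N w, ρ.HasOrder N w := by
    obtain ⟨w, hw⟩ := hs.1
    exact (exists_hasOrder hO hnt hs hw).imp fun N hN => ⟨w, hN⟩
  obtain ⟨w, hw⟩ := Nat.find_spec hex
  refine ⟨w, ?_⟩
  rintro ⟨u, rfl⟩
  have hu : u ≠ 0 := by
    rintro rfl
    simpa using hw.ne_zero
  obtain ⟨M, hM⟩ := exists_hasOrder hO hnt hs hu
  have hle := (hM.d_neg_one_sub_smul c).le_of_mem_annihilatedFrom hw.1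
  have hmin := Nat.find_min' hex ⟨u, hM⟩
  omega

lemma b_ne_one_of_actSimple (hO : ρ.InO) (hnt : ¬ ρ.IsTrivial) (hs : ρ.IsSimple)
    (hL : ActSimple (ρ.Lact lam a b)) : b ≠ 1 := by
  rintro rfl
  rcases forall_eq_bot_or_forall_eq_top hL
    (fun j : ℤ => LinearMap.range (ρ.d (-1) - (a + j) • LinearMap.id))
    (fun k j _ => degAct_b_one_mem_range (hO := hO) k j) with hbot | htop
  · obtain ⟨w, hw⟩ := hs.1
    obtain ⟨N, hN⟩ := exists_hasOrder hO hnt hs hw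
    exact (hN.d_neg_one_sub_smul (a + (0 : ℤ))).ne_zero
      ((Submodule.eq_bot_iff _).1 (hbot 0) _ ⟨w, rfl⟩)
  · obtain ⟨w, hw⟩ := exists_notMem_range_d_neg_one_sub_smul hO hnt hs (a + (0 : ℤ))
    exact hw (htop 0 ▸ Submodule.mem_top)

end Simplicity

section Intertwiners

/-- The family `Φ_j : W ⊗ t^j → W₀ ⊗ t^j` commutes with the actions of the `d_k` on
`L(W, λ, a, b)` and `L(W₀, λ₀, a₀, b₀)`. -/
def IsGradedIntertwiner (lam a b lam₀ a₀ b₀ : ℂ) (Φ : ℤ → W ≃ₗ[ℂ] W₀) : Prop :=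
  ∀ (k j : ℤ) (w : W),
    Φ (k + j) (ρ.degAct hO lam a b k j w) = ρ₀.degAct hO₀ lam₀ a₀ b₀ k j (Φ j w)

/-- The graded isomorphism of `W ⊗ ℂ[t, t⁻¹]` with `W₀ ⊗ ℂ[t, t⁻¹]` given by isomorphisms in each
degree. -/
noncomputable def gradedEquiv (Φ : ℤ → W ≃ₗ[ℂ] W₀) : (ℤ →₀ W) ≃ₗ[ℂ] (ℤ →₀ W₀) := by
  classical
  exact finsuppLequivDFinsupp ℂ ≪≫ₗ DFinsupp.mapRange.linearEquiv Φ ≪≫ₗ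
    (finsuppLequivDFinsupp ℂ).symm

lemma gradedEquiv_apply (Φ : ℤ → W ≃ₗ[ℂ] W₀) (f : ℤ →₀ W) (i : ℤ) :
    gradedEquiv Φ f i = Φ i (f i) := by
  simp [gradedEquiv]

variable {hO hO₀}

lemma IsGradedIntertwiner.symm {Φ : ℤ → W ≃ₗ[ℂ] W₀}
    (hΦ : IsGradedIntertwiner hO hO₀ lam a b lam₀ a₀ b₀ Φ) :
    IsGradedIntertwiner hO₀ hO lam₀ a₀ b₀ lam a b fun j => (Φ j).symm := fun k j w => by
  rw [LinearEquiv.symm_apply_eq, hΦ, LinearEquiv.apply_symm_apply]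

lemma IsGradedIntertwiner.gradedEquiv_Lact {Φ : ℤ → W ≃ₗ[ℂ] W₀}
    (hΦ : IsGradedIntertwiner hO hO₀ lam a b lam₀ a₀ b₀ Φ) (k : ℤ) (f : ℤ →₀ W) :
    gradedEquiv Φ (ρ.Lact lam a b k f) = ρ₀.Lact lam₀ a₀ b₀ k (gradedEquiv Φ f) := by
  ext i
  rw [gradedEquiv_apply, Lact_apply hO, Lact_apply hO₀, gradedEquiv_apply, ← hΦ, add_sub_cancel]

lemma map_single_apply_eq_zero (hO : ρ.InO) (hO₀ : ρ₀.InO) (φ : (ℤ →₀ W) →ₗ[ℂ] (ℤ →₀ W₀))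
    (hφ : ∀ f, φ (ρ.Lact lam a b 0 f) = ρ₀.Lact lam₀ a₀ b₀ 0 (φ f)) {i j : ℤ}
    (hij : a + j ≠ a₀ + i) (w : W) : φ (Finsupp.single j w) i = 0 := by
  have hweight : ρ.Lact lam a b 0 (Finsupp.single j w) = (a + j) • Finsupp.single j w := by
    ext l
    rw [Lact_zero_apply hO, Finsupp.smul_apply]
    rcases eq_or_ne j l with rfl | h
    · rfl
    · rw [Finsupp.single_eq_of_ne h.symm, smul_zero, smul_zero]
  have h := DFunLike.congr_fun (hφ (Finsupp.single j w)) i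
  rw [hweight, map_smul, Finsupp.smul_apply, Lact_zero_apply hO₀, ← sub_eq_zero, ← sub_smul] at h
  exact (smul_eq_zero.1 h).resolve_left (sub_ne_zero.2 hij)

lemma eq_of_equiv (hO : ρ.InO) (hO₀ : ρ₀.InO) (hne : ∃ w : W, w ≠ 0)
    (ha : 0 ≤ a.re ∧ a.re < 1) (ha₀ : 0 ≤ a₀.re ∧ a₀.re < 1) (φ : (ℤ →₀ W) ≃ₗ[ℂ] (ℤ →₀ W₀))
    (hφ : ∀ f, φ (ρ.Lact lam a b 0 f) = ρ₀.Lact lam₀ a₀ b₀ 0 (φ f)) : a = a₀ := by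
  obtain ⟨w, hw⟩ := hne
  obtain ⟨i, hi⟩ : ∃ i, φ (Finsupp.single 0 w) i ≠ 0 := by
    by_contra! h
    exact hw (by simpa using (Finsupp.ext h : φ (Finsupp.single 0 w) = 0))
  have hai : a + (0 : ℤ) = a₀ + i := by
    by_contra h
    exact hi (map_single_apply_eq_zero hO hO₀ φ.toLinearMap hφ h w)
  have hre : a.re = a₀.re + i := by simpa using congrArg Complex.re hai
  obtain rfl : i = 0 := by
    have h1 : (-1 : ℝ) < i := by linarith [ha.1, ha₀.2]
    have h2 : (i : ℝ) < 1 := by linarith [ha.2, ha₀.1]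
    norm_cast at h1 h2
    omega
  simpa using hai

lemma map_single_eq_single (hO : ρ.InO) (hO₀ : ρ₀.InO) (φ : (ℤ →₀ W) →ₗ[ℂ] (ℤ →₀ W₀))
    (hφ : ∀ f, φ (ρ.Lact lam a b 0 f) = ρ₀.Lact lam₀ a b₀ 0 (φ f)) (j : ℤ) (w : W) :
    φ (Finsupp.single j w) = Finsupp.single j (φ (Finsupp.single j w) j) := by
  ext i
  rcases eq_or_ne j i with rfl | h
  · simp
  · rw [Finsupp.single_eq_of_ne h.symm, map_single_apply_eq_zero hO hO₀ φ hφ (by simpa using h)]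

lemma exists_isGradedIntertwiner_of_equiv (hO : ρ.InO) (hO₀ : ρ₀.InO)
    (φ : (ℤ →₀ W) ≃ₗ[ℂ] (ℤ →₀ W₀))
    (hφ : ∀ (k : ℤ) (f : ℤ →₀ W), φ (ρ.Lact lam a b k f) = ρ₀.Lact lam₀ a b₀ k (φ f)) :
    ∃ Φ : ℤ → W ≃ₗ[ℂ] W₀, IsGradedIntertwiner hO hO₀ lam a b lam₀ a b₀ Φ := by
  have hφ' : ∀ f, φ.symm (ρ₀.Lact lam₀ a b₀ 0 f) = ρ.Lact lam a b 0 (φ.symm f) := fun f => by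
    rw [LinearEquiv.symm_apply_eq, hφ, LinearEquiv.apply_symm_apply]
  have hsingle := map_single_eq_single hO hO₀ φ.toLinearMap (hφ 0)
  have hsingle' := map_single_eq_single hO₀ hO φ.symm.toLinearMap hφ'
  simp only [LinearEquiv.coe_coe] at hsingle hsingle'
  let Φ (j : ℤ) : W ≃ₗ[ℂ] W₀ := LinearEquiv.ofLinearMap
    (Finsupp.lapply j ∘ₗ φ.toLinearMap ∘ₗ Finsupp.lsingle j)
    (Finsupp.lapply j ∘ₗ φ.symm.toLinearMap ∘ₗ Finsupp.lsingle j)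
    (LinearMap.ext fun w => by simp [← hsingle'])
    (LinearMap.ext fun w => by simp [← hsingle])
  refine ⟨Φ, fun k j w => ?_⟩
  have h := DFunLike.congr_fun (hφ k (Finsupp.single j w)) (k + j)
  rwa [Lact_single hO, hsingle j w, Lact_single hO₀, Finsupp.single_eq_same] at h

end Intertwiners

end Graded

section HighestWeight

open Polynomial

variable {ρ : WittRep W} {ρ₀ : WittRep W₀} {w₀ : W} {b' : ℂ}

/-- The map `ℂ[X] → W`, `f ↦ f(d_{-1}) w₀`; for a highest weight vector `w₀` of a nontrivial simple
module it is an isomorphism. -/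
noncomputable def polyMap (ρ : WittRep W) (w₀ : W) : ℂ[X] →ₗ[ℂ] W :=
  LinearMap.applyₗ w₀ ∘ₗ (aeval (ρ.d (-1))).toLinearMap

lemma polyMap_one : ρ.polyMap w₀ 1 = w₀ := by simp [polyMap]

lemma polyMap_X_mul (f : ℂ[X]) : ρ.polyMap w₀ (X * f) = ρ.d (-1) (ρ.polyMap w₀ f) := by
  simp [polyMap]

lemma polyMap_C_mul (c : ℂ) (f : ℂ[X]) : ρ.polyMap w₀ (C c * f) = c • ρ.polyMap w₀ f := by
  rw [← smul_eq_C_mul, map_smul]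

lemma polyMap_injective (hO : ρ.InO) (hnt : ¬ ρ.IsTrivial) (hs : ρ.IsSimple) (hw₀ : w₀ ≠ 0) :
    Function.Injective (ρ.polyMap w₀) := by
  have hroots : ∀ (s : Multiset ℂ), ρ.polyMap w₀ (s.map fun c => X - C c).prod ≠ 0 := fun s => by
    induction s using Multiset.induction with
    | empty => simpa [polyMap_one] using hw₀
    | cons c s ih =>
      obtain ⟨N, hN⟩ := exists_hasOrder hO hnt hs ih
      rw [Multiset.map_cons, Multiset.prod_cons, sub_mul, map_sub, polyMap_X_mul, polyMap_C_mul]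
      exact (hN.d_neg_one_sub_smul c).ne_zero
  refine (injective_iff_map_eq_zero _).2 fun f hf => by_contra fun hf0 => ?_
  rw [(IsAlgClosed.splits f).eq_prod_roots, polyMap_C_mul] at hf
  exact smul_ne_zero (leadingCoeff_ne_zero.2 hf0) (hroots _) hf

lemma d_polyMap_X_pow_mem_range (hw : ρ.IsHW w₀ b') (n : ℕ) {i : ℤ} (hi : -1 ≤ i) :
    ρ.d i (ρ.polyMap w₀ (X ^ n)) ∈ LinearMap.range (ρ.polyMap w₀) := by
  rcases hi.eq_or_lt with rfl | hi0
  · exact ⟨X * X ^ n, polyMap_X_mul _⟩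
  induction n generalizing i with
  | zero =>
    rw [pow_zero, polyMap_one]
    rcases (show 0 ≤ i by omega).eq_or_lt with rfl | hi1
    · exact ⟨C b' * 1, by rw [polyMap_C_mul, polyMap_one, hw.2.1]⟩
    · exact ⟨0, by rw [map_zero, hw.2.2 i hi1]⟩
  | succ n ih =>
    rw [pow_succ', polyMap_X_mul, ρ.d_d_apply hi le_rfl]
    obtain ⟨f, hf⟩ := ih hi hi0
    refine add_mem ⟨X * f, by rw [polyMap_X_mul, hf]⟩ (Submodule.smul_mem _ _ ?_)
    rcases (show -1 ≤ i + -1 by omega).eq_or_lt with h | h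
    · exact h ▸ ⟨X * X ^ n, polyMap_X_mul _⟩
    · exact ih h.le h

lemma polyMap_surjective (hs : ρ.IsSimple) (hw : ρ.IsHW w₀ b') :
    Function.Surjective (ρ.polyMap w₀) := by
  refine LinearMap.range_eq_top.1 ((hs.2 _ ?_).resolve_left fun hbot => hw.1 ?_)
  · rintro i hi _ ⟨f, rfl⟩
    induction f using Polynomial.induction_on' with
    | add p q hp hq =>
      rw [map_add, map_add]
      exact add_mem hp hq
    | monomial n c =>
      rw [← C_mul_X_pow_eq_monomial, polyMap_C_mul, map_smul]
      exact Submodule.smul_mem _ _ (d_polyMap_X_pow_mem_range hw n hi)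
  · exact (Submodule.eq_bot_iff _).1 hbot w₀ ⟨1, polyMap_one⟩

lemma IsHW.E_eq (hw : ρ.IsHW w₀ b') (k : ℤ) : ρ.E k w₀ = ρ.d (-1) w₀ + (k * b') • w₀ := by
  rw [E_eq_sum (n := 1) (mem_annihilatedFrom.2 fun i hi => hw.2.2 i (by exact_mod_cast hi))]
  simp [Finset.sum_range_succ, expCoeff_zero, expCoeff_one, hw.2.1, smul_smul]

lemma E_polyMap_X_pow (hO : ρ.InO) (hw : ρ.IsHW w₀ b') (k : ℤ) (n : ℕ) :
    ρ.E k (ρ.polyMap w₀ (X ^ n)) =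
      ρ.polyMap w₀ ((X + C ((k : ℂ) * b')) * (X - C (k : ℂ)) ^ n) := by
  induction n with
  | zero =>
    rw [pow_zero, pow_zero, polyMap_one, add_mul, map_add, polyMap_X_mul, polyMap_C_mul,
      polyMap_one, hw.E_eq]
  | succ n ih =>
    rw [pow_succ', polyMap_X_mul, E_d_neg_one hO, ih, ← polyMap_X_mul, ← polyMap_C_mul, ← map_sub]
    congr 1
    ring

lemma E_polyMap (hO : ρ.InO) (hw : ρ.IsHW w₀ b') (k : ℤ) (f : ℂ[X]) :
    ρ.E k (ρ.polyMap w₀ f) =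
      ρ.polyMap w₀ ((X + C ((k : ℂ) * b')) * f.comp (X - C (k : ℂ))) := by
  rw [← ELin_apply hO]
  induction f using Polynomial.induction_on' with
  | add p q hp hq => rw [map_add, map_add, hp, hq, add_comp, mul_add, map_add]
  | monomial n c =>
    rw [← C_mul_X_pow_eq_monomial, polyMap_C_mul, map_smul, ELin_apply, E_polyMap_X_pow hO hw,
      ← polyMap_C_mul]
    congr 1
    simp only [mul_comp, C_comp, pow_comp, X_comp]
    ring

/-- The operator on `ℂ[X]` corresponding under `polyMap` to `d_k : W ⊗ t^j → W ⊗ t^{k+j}`, for a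
highest weight module `W` of weight `b'`. -/
noncomputable def polyAct (lam a b b' : ℂ) (k j : ℤ) (f : ℂ[X]) : ℂ[X] :=
  C (lam ^ k) * ((X + C ((k : ℂ) * b')) * f.comp (X - C (k : ℂ))) - X * f + C (a + k * b + j) * f

lemma degAct_polyMap (hO : ρ.InO) (hw : ρ.IsHW w₀ b') (lam a b : ℂ) (k j : ℤ) (f : ℂ[X]) :
    ρ.degAct hO lam a b k j (ρ.polyMap w₀ f) = ρ.polyMap w₀ (polyAct lam a b b' k j f) := by
  rw [degAct_apply, E_polyMap hO hw, ← polyMap_C_mul, ← polyMap_X_mul, ← polyMap_C_mul, ← map_sub,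
    ← map_add, polyAct]

/-- The involution `f(X) ↦ f(c - X)` of the polynomial ring. -/
noncomputable def reflectEquiv (c : ℂ) : ℂ[X] ≃ₗ[ℂ] ℂ[X] :=
  LinearEquiv.ofInvolutive
    { toFun := fun f => f.comp (C c - X)
      map_add' := fun _ _ => add_comp
      map_smul' := fun _ _ => smul_comp _ _ _ }
    fun f => by simp [comp_assoc]

lemma reflectEquiv_apply (c : ℂ) (f : ℂ[X]) : reflectEquiv c f = f.comp (C c - X) := rfl

-- The reflection `X ↦ a + j - X` exchanges the terms `f(X - k)` and `f(X)` of `polyAct`.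
lemma smul_reflectEquiv_polyAct {lam : ℂ} (hlam : lam ≠ 0) (a b' b'₀ : ℂ) (k j : ℤ) (f : ℂ[X]) :
    lam⁻¹ ^ (k + j) •
        reflectEquiv (a + (k + j : ℤ)) (polyAct lam a (b'₀ + 1) b' k j f) =
      lam⁻¹ ^ j • polyAct lam⁻¹ a (b' + 1) b'₀ k j (reflectEquiv (a + j) f) := by
  have hlam' : lam⁻¹ ^ k * lam ^ k = 1 := by
    rw [inv_zpow, inv_mul_cancel₀ (zpow_ne_zero _ hlam)]
  refine Polynomial.funext fun x => ?_
  simp only [reflectEquiv_apply, polyAct, eval_smul, eval_comp, eval_add, eval_sub, eval_mul,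
    eval_C, eval_X, smul_eq_mul, Int.cast_add, zpow_add₀ (inv_ne_zero hlam)]
  rw [show a + ((k : ℂ) + j) - x - k = a + j - x by ring,
    show a + (j : ℂ) - (x - k) = a + (k + j) - x by ring]
  linear_combination (lam⁻¹ ^ j * (a + (k + j) - x + k * b') * f.eval (a + j - x)) * hlam'

lemma exists_isGradedIntertwiner_swap (hO : ρ.InO) (hO₀ : ρ₀.InO) (hnt : ¬ ρ.IsTrivial)
    (hnt₀ : ¬ ρ₀.IsTrivial) (hs : ρ.IsSimple) (hs₀ : ρ₀.IsSimple) {lam : ℂ} (hlam : lam ≠ 0) (a : ℂ)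
    {b'₀ : ℂ} {w₀' : W₀} (hw : ρ.IsHW w₀ b') (hw' : ρ₀.IsHW w₀' b'₀) :
    ∃ θ : ℤ → W ≃ₗ[ℂ] W₀,
      IsGradedIntertwiner hO hO₀ lam a (b'₀ + 1) lam⁻¹ a (b' + 1) θ ∧
        ∀ j, θ j w₀ = lam⁻¹ ^ j • w₀' := by
  let Θ : ℂ[X] ≃ₗ[ℂ] W := LinearEquiv.ofBijective (ρ.polyMap w₀)
    ⟨polyMap_injective hO hnt hs hw.1, polyMap_surjective hs hw⟩
  let Θ₀ : ℂ[X] ≃ₗ[ℂ] W₀ := LinearEquiv.ofBijective (ρ₀.polyMap w₀')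
    ⟨polyMap_injective hO₀ hnt₀ hs₀ hw'.1, polyMap_surjective hs₀ hw'⟩
  let θ (j : ℤ) : W ≃ₗ[ℂ] W₀ := Θ.symm ≪≫ₗ reflectEquiv (a + j) ≪≫ₗ Θ₀ ≪≫ₗ
    LinearEquiv.smulOfNeZero ℂ W₀ (lam⁻¹ ^ j) (zpow_ne_zero _ (inv_ne_zero hlam))
  have hθ (j f) : θ j (ρ.polyMap w₀ f) = ρ₀.polyMap w₀' (lam⁻¹ ^ j • reflectEquiv (a + j) f) := by
    have hΘ : Θ.symm (ρ.polyMap w₀ f) = f := Θ.symm_apply_apply f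
    simp only [θ, LinearEquiv.trans_apply, hΘ, map_smul]
    rfl
  refine ⟨θ, fun k j w => ?_, fun j => ?_⟩
  · obtain ⟨f, rfl⟩ := polyMap_surjective hs hw w
    rw [degAct_polyMap hO hw, hθ, hθ, smul_reflectEquiv_polyAct hlam, map_smul, map_smul, map_smul,
      degAct_polyMap hO₀ hw']
  · simpa [polyMap_one, reflectEquiv_apply] using hθ j 1

lemma not_isHW_of_actSimple_neg_one (hO : ρ.InO) (hnt : ¬ ρ.IsTrivial) (hs : ρ.IsSimple) {a b : ℂ}
    (hL : ActSimple (ρ.Lact (-1) a b)) (w₀ : W) : ¬ ρ.IsHW w₀ (b - 1) := by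
  intro hw
  obtain ⟨θ, hθ, hθw⟩ := exists_isGradedIntertwiner_swap hO hO hnt hnt hs hs
    (neg_ne_zero.2 one_ne_zero) a hw hw
  rw [sub_add_cancel, inv_neg_one] at hθ
  rcases forall_eq_bot_or_forall_eq_top hL
    (fun j => LinearMap.eqLocus (θ j).toLinearMap LinearMap.id)
    (fun k j w hwj => (hθ k j w).trans (congrArg _ hwj)) with hbot | htop
  · exact hw.1 ((Submodule.eq_bot_iff _).1 (hbot 0) w₀ (by simp [hθw]))
  · have hfix : θ 1 w₀ = w₀ := LinearMap.mem_eqLocus.1 (htop 1 ▸ Submodule.mem_top)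
    have hneg : -w₀ = w₀ := by simpa [hθw] using hfix
    have htwo : (2 : ℂ) • w₀ = 0 := by rw [two_smul, ← sub_neg_eq_add, hneg, sub_self]
    exact hw.1 ((smul_eq_zero.1 htwo).resolve_left two_ne_zero)

end HighestWeight

section Classification

variable {ρ : WittRep W} {ρ₀ : WittRep W₀} {hO : ρ.InO} {hO₀ : ρ₀.InO} {lam lam₀ a a₀ b b₀ : ℂ}

lemma isPolyFun_E_E (hO : ρ.InO) (l : ℤ) (w : W) :
    IsPolyFun fun m : ℤ => ρ.E (l - m) (ρ.E m w) := by
  obtain ⟨n, hn⟩ := hO.exists_mem_annihilatedFrom w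
  have hpow (v : W) (i : ℕ) : IsPolyFun fun m : ℤ => (m : ℂ) ^ i • ρ.E (l - m) v := by
    induction i with
    | zero => simpa [sub_eq_add_neg] using isPolyFun_E hO l (-1) v
    | succ i ih => simpa [smul_smul, ← pow_succ'] using ih.affine_smul (0 : ℂ) 1
  simp only [E_eq_sum hn, ← ELin_apply hO (_ - _), map_sum, map_smul]
  exact IsPolyFun.sum _ fun i => hpow _ i

-- The exponential polynomial in `m` by which `d_{l-m} d_m` acts, sorted by bases `λ`, `λ⁻¹`, `1`.
lemma degAct_degAct (hlam : lam ≠ 0) (l j m : ℤ) (w : W) :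
    ρ.degAct hO lam a b (l - m) (m + j) (ρ.degAct hO lam a b m j w) =
      lam ^ m • (((a + l * b + j) + (1 - b) * m) • ρ.E m w + -ρ.d (-1) (ρ.E m w)) +
      lam⁻¹ ^ m • lam ^ l •
        (((a + j + l) + (b - 1) * m) • ρ.E (l - m) w + -ρ.d (-1) (ρ.E (l - m) w)) +
      (lam ^ l • ρ.E (l - m) (ρ.E m w) + ρ.d (-1) (ρ.d (-1) w) +
        ((-(a + j) - (a + l * b + j)) + (-1) * m : ℂ) • ρ.d (-1) w +
        ((a + l * b + j) + (1 - b) * m) • ((a + j) + b * m) • w) := by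
  have hpow : lam ^ (l - m) = lam ^ l * lam⁻¹ ^ m := by
    rw [zpow_sub₀ hlam, inv_zpow, div_eq_mul_inv]
  have hcancel : lam ^ l * lam⁻¹ ^ m * lam ^ m = lam ^ l := by
    rw [inv_zpow, inv_mul_cancel_right₀ (zpow_ne_zero _ hlam)]
  have hE : ρ.E (l - m) (ρ.degAct hO lam a b m j w) = lam ^ m • ρ.E (l - m) (ρ.E m w) -
      (ρ.d (-1) (ρ.E (l - m) w) - ((l - m : ℤ) : ℂ) • ρ.E (l - m) w) +
      (a + m * b + j) • ρ.E (l - m) w := by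
    rw [← ELin_apply hO, degAct_apply, map_add, map_sub, map_smul, map_smul, ELin_apply,
      ELin_apply, ELin_apply, E_d_neg_one hO]
  rw [degAct_apply, hE, hpow, smul_add, smul_sub, smul_smul _ (lam ^ m), hcancel]
  simp only [degAct_apply, map_add, map_sub, map_smul]
  push_cast
  module

/-- The coefficient `c` such that `d_{l-m} d_m` maps a vector `w ⊗ t^j` annihilated by all `d_i`
with `i ≥ N` to an exponential polynomial in `m` whose term with base `β ≠ 1` has top coefficient
`c • expCoeff N w`. -/
noncomputable def topCoeff (lam b β : ℂ) (l : ℤ) (N : ℕ) : ℂ :=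
  (if lam = β then 1 - b else 0) + if lam⁻¹ = β then lam ^ l * ((b - 1) * (-1) ^ N) else 0

lemma hasExpTopCoeff_degAct_degAct (hlam : lam ≠ 0) {β : ℂ} (hβ : β ≠ 1) {N : ℕ} {w : W}
    (hw : w ∈ ρ.annihilatedFrom N) (l j : ℤ) :
    HasExpTopCoeff β (N + 1) (topCoeff lam b β l N • ρ.expCoeff N w) fun m =>
      ρ.degAct hO lam a b (l - m) (m + j) (ρ.degAct hO lam a b m j w) := by
  have hE : HasTopCoeff N (ρ.expCoeff N w) fun m : ℤ => ρ.E m w := by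
    simpa using hasTopCoeff_E hw 0 1
  have hE' : HasTopCoeff N ((-1 : ℂ) ^ N • ρ.expCoeff N w) fun m : ℤ => ρ.E (l - m) w := by
    simpa [sub_eq_add_neg] using hasTopCoeff_E hw l (-1)
  have hlow {v : W} {f : ℤ → W} (hf : HasTopCoeff N v f) :
      HasTopCoeff (N + 1) 0 fun m => -ρ.d (-1) (f m) :=
    (hf.map (-ρ.d (-1)).toAddMonoidHom).raise N.lt_succ_self
  have hpoly : IsPolyFun fun m : ℤ =>
      lam ^ l • ρ.E (l - m) (ρ.E m w) + ρ.d (-1) (ρ.d (-1) w) +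
        ((-(a + j) - (a + l * b + j)) + (-1) * m : ℂ) • ρ.d (-1) w +
        ((a + l * b + j) + (1 - b) * m) • ((a + j) + b * m) • w :=
    ((((isPolyFun_E_E hO l w).map (LinearMap.lsmul ℂ W (lam ^ l)).toAddMonoidHom).add
      (IsPolyFun.const _)).add ((IsPolyFun.const _).affine_smul _ _)).add
      (((IsPolyFun.const w).affine_smul _ _).affine_smul _ _)
  have h := ((HasExpTopCoeff.zpow_smul (β := β) ((hE.affine_smul (a + l * b + j) (1 - b)).add
    (hlow hE)) hlam).add (HasExpTopCoeff.zpow_smul (β := β) (((hE'.affine_smul (a + j + l)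
    (b - 1)).add (hlow hE')).map (LinearMap.lsmul ℂ W (lam ^ l)).toAddMonoidHom)
    (inv_ne_zero hlam))).add (HasExpTopCoeff.of_isPolyFun (N := N + 1) hβ hpoly)
  convert h using 1
  · simp only [topCoeff, add_smul, ite_smul, zero_smul, add_zero, mul_smul]
    rfl
  · exact funext fun m => degAct_degAct hlam l j m w

lemma topCoeff_self (h : lam⁻¹ ≠ lam) (l : ℤ) (N : ℕ) : topCoeff lam b lam l N = 1 - b := by
  rw [topCoeff, if_pos rfl, if_neg h, add_zero]

lemma topCoeff_inv (h : lam⁻¹ ≠ lam) (l : ℤ) (N : ℕ) :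
    topCoeff lam b lam⁻¹ l N = lam ^ l * topCoeff lam b lam⁻¹ 0 N := by
  simp [topCoeff, h.symm]

lemma topCoeff_neg_one (b : ℂ) (N : ℕ) (m : ℤ) :
    topCoeff (-1) b (-1) (N + 1 + 2 * m) N = 2 * (1 - b) := by
  have hpow : (-1 : ℂ) ^ ((N : ℤ) + 1 + 2 * m) * (-1) ^ N = -1 := by
    rw [← zpow_natCast (-1 : ℂ) N, ← zpow_add₀ (neg_ne_zero.2 one_ne_zero)]
    exact Odd.neg_one_zpow ⟨N + m, by ring⟩
  rw [topCoeff, if_pos rfl, if_pos inv_neg_one, mul_left_comm, hpow]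
  ring

lemma eq_neg_one_of_inv_eq_self (hlam : lam ≠ 0) (hlam1 : lam ≠ 1) (h : lam⁻¹ = lam) : lam = -1 :=
  (mul_self_eq_one_iff.1 (by nth_rw 1 [← h]; exact inv_mul_cancel₀ hlam)).resolve_left hlam1

lemma topCoeff_self_ne_zero (hlam : lam ≠ 0) (hlam1 : lam ≠ 1) (hb : b ≠ 1) (N : ℕ) :
    topCoeff lam b lam (N + 1) N ≠ 0 := by
  by_cases h : lam⁻¹ = lam
  · obtain rfl := eq_neg_one_of_inv_eq_self hlam hlam1 h
    simpa [sub_eq_zero, hb.symm] using (topCoeff_neg_one b N 0).trans_ne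
      (mul_ne_zero two_ne_zero (sub_ne_zero.2 hb.symm))
  · rw [topCoeff_self h]
    exact sub_ne_zero.2 hb.symm

namespace IsGradedIntertwiner

variable {Φ : ℤ → W ≃ₗ[ℂ] W₀} {N : ℕ} {w : W}

lemma topCoeff_smul_eq (hΦ : IsGradedIntertwiner hO hO₀ lam a b lam₀ a₀ b₀ Φ) (hlam : lam ≠ 0)
    (hlam₀ : lam₀ ≠ 0) {β : ℂ} (hβ : β ≠ 0) (hβ1 : β ≠ 1) (hw : w ∈ ρ.annihilatedFrom N) {j : ℤ}
    (hw₀ : Φ j w ∈ ρ₀.annihilatedFrom N) (l : ℤ) :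
    topCoeff lam b β l N • Φ (l + j) (ρ.expCoeff N w) =
      topCoeff lam₀ b₀ β l N • ρ₀.expCoeff N (Φ j w) := by
  have h := (hasExpTopCoeff_degAct_degAct (hO := hO) (a := a) (b := b) hlam hβ1 hw l j).map
    (Φ (l + j)).toLinearMap
  have hcomm : (fun m => Φ (l + j)
        (ρ.degAct hO lam a b (l - m) (m + j) (ρ.degAct hO lam a b m j w))) =
      fun m => ρ₀.degAct hO₀ lam₀ a₀ b₀ (l - m) (m + j)
        (ρ₀.degAct hO₀ lam₀ a₀ b₀ m j (Φ j w)) := by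
    funext m
    rw [← hΦ m j w, ← hΦ (l - m) (m + j), show l - m + (m + j) = l + j by ring]
  simp only [LinearEquiv.coe_coe, hcomm, map_smul] at h
  exact h.unique hβ (hasExpTopCoeff_degAct_degAct hlam₀ hβ1 hw₀ l j)

lemma map_mem_annihilatedFrom (hΦ : IsGradedIntertwiner hO hO₀ lam a b lam₀ a₀ b₀ Φ)
    (hnt₀ : ¬ ρ₀.IsTrivial) (hs₀ : ρ₀.IsSimple) (hlam : lam ≠ 0) (hlam₀ : lam₀ ≠ 0)
    (hlam₀1 : lam₀ ≠ 1) (hb₀ : b₀ ≠ 1) (hw : w ∈ ρ.annihilatedFrom N) (j : ℤ) :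
    Φ j w ∈ ρ₀.annihilatedFrom N := by
  rcases eq_or_ne (Φ j w) 0 with h0 | hne
  · exact h0 ▸ zero_mem _
  obtain ⟨r, hr⟩ := exists_hasOrder hO₀ hnt₀ hs₀ hne
  rcases le_or_gt r N with hle | hlt
  · exact annihilatedFrom_mono (Nat.cast_le.2 hle) hr.1
  have h := hΦ.topCoeff_smul_eq hlam hlam₀ hlam₀ hlam₀1
    (annihilatedFrom_mono (Nat.cast_le.2 hlt.le) hw) hr.1 (r + 1)
  rw [expCoeff_eq_zero_of_mem_annihilatedFrom hw (Nat.cast_lt.2 hlt), map_zero, smul_zero] at h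
  exact absurd h.symm
    (smul_ne_zero (topCoeff_self_ne_zero hlam₀ hlam₀1 hb₀ r) hr.expCoeff_ne_zero)

lemma eq_or_inv_eq (hΦ : IsGradedIntertwiner hO hO₀ lam a b lam₀ a₀ b₀ Φ) (hlam : lam ≠ 0)
    (hlam1 : lam ≠ 1) (hlam₀ : lam₀ ≠ 0) (hb : b ≠ 1) (hw : ρ.HasOrder N w) {j : ℤ}
    (hw₀ : Φ j w ∈ ρ₀.annihilatedFrom N) : lam₀ = lam ∨ lam₀⁻¹ = lam := by
  by_contra! hne
  have h := hΦ.topCoeff_smul_eq hlam hlam₀ hlam hlam1 hw.1 hw₀ (N + 1)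
  rw [topCoeff.eq_1 lam₀, if_neg hne.1, if_neg hne.2, add_zero, zero_smul] at h
  exact smul_ne_zero (topCoeff_self_ne_zero hlam hlam1 hb N)
    ((LinearEquiv.map_ne_zero_iff _).2 hw.expCoeff_ne_zero) h

lemma map_expCoeff_eq (hΦ : IsGradedIntertwiner hO hO₀ lam a b lam a₀ b₀ Φ) (hlam : lam ≠ 0)
    (hlam1 : lam ≠ 1) (hinv : lam⁻¹ ≠ lam) (hb : b ≠ 1) (hw : w ∈ ρ.annihilatedFrom N)
    (hw₀ : Φ 0 w ∈ ρ₀.annihilatedFrom N) (i : ℤ) :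
    Φ i (ρ.expCoeff N w) = Φ 0 (ρ.expCoeff N w) := by
  have h := hΦ.topCoeff_smul_eq hlam hlam hlam hlam1 hw hw₀
  simp only [topCoeff_self hinv, add_zero] at h
  exact smul_right_injective _ (sub_ne_zero.2 hb.symm) ((h i).trans (h 0).symm)

lemma map_expCoeff_eq_zpow_smul (hΦ : IsGradedIntertwiner hO hO₀ lam a b lam⁻¹ a₀ b₀ Φ)
    (hlam : lam ≠ 0) (hlam1 : lam ≠ 1) (hinv : lam⁻¹ ≠ lam) (hb : b ≠ 1)
    (hw : w ∈ ρ.annihilatedFrom N) (hw₀ : Φ 0 w ∈ ρ₀.annihilatedFrom N) (i : ℤ) :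
    Φ i (ρ.expCoeff N w) = lam⁻¹ ^ i • Φ 0 (ρ.expCoeff N w) := by
  have h := hΦ.topCoeff_smul_eq hlam (inv_ne_zero hlam) hlam hlam1 hw hw₀
  have hcoeff (l : ℤ) :
      topCoeff lam⁻¹ b₀ lam l N = lam⁻¹ ^ l * topCoeff lam⁻¹ b₀ lam 0 N := by
    simpa only [inv_inv] using topCoeff_inv (lam := lam⁻¹) (b := b₀) (by rwa [inv_inv, ne_comm]) l N
  simp only [topCoeff_self hinv, add_zero] at h
  refine smul_right_injective _ (sub_ne_zero.2 hb.symm) ?_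
  dsimp only
  rw [h, hcoeff, mul_smul, ← h, smul_comm]

lemma map_add_two_mul_expCoeff (hΦ : IsGradedIntertwiner hO hO₀ (-1) a b (-1) a₀ b₀ Φ)
    (hb : b ≠ 1) (hw : w ∈ ρ.annihilatedFrom N) (hw₀ : ∀ j, Φ j w ∈ ρ₀.annihilatedFrom N)
    (i m : ℤ) : Φ (i + 2 * m) (ρ.expCoeff N w) = Φ i (ρ.expCoeff N w) := by
  have h (m : ℤ) := hΦ.topCoeff_smul_eq (neg_ne_zero.2 one_ne_zero) (neg_ne_zero.2 one_ne_zero)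
    (neg_ne_zero.2 one_ne_zero) (by norm_num) hw (hw₀ (i - N - 1)) (N + 1 + 2 * m)
  simp only [topCoeff_neg_one] at h
  have hm := smul_right_injective _ (mul_ne_zero two_ne_zero (sub_ne_zero.2 hb.symm))
    ((h m).trans (h 0).symm)
  rwa [show (N : ℤ) + 1 + 2 * m + (i - N - 1) = i + 2 * m by ring,
    show (N : ℤ) + 1 + 2 * 0 + (i - N - 1) = i by ring] at hm

section TwoTerm

variable {u : W} {s δ : W₀}

-- Intertwining `d_k` on `u ⊗ t^{n-k}`, sorted by the bases `1`, `λ₀`, `λ₀⁻¹`, `λ` of the resulting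
-- exponential polynomials in `k`.
lemma sub_E_zpow_smul_eq (hΦ : IsGradedIntertwiner hO hO₀ lam a b lam₀ a₀ b₀ Φ)
    (hlam₀ : lam₀ ≠ 0) (hu : ∀ i, Φ i u = s + lam₀ ^ i • δ) (n k : ℤ) :
    (-Φ n (ρ.d (-1) u) + ((a + n) + (b - 1) * k) • Φ n u + ρ₀.d (-1) s +
        (-(a₀ + n) + (1 - b₀) * k) • s) - ρ₀.E k (lam₀ ^ n • δ) =
      lam₀ ^ k • ρ₀.E k s +
        lam₀⁻¹ ^ k • (((a₀ + n) + (b₀ - 1) * k) • lam₀ ^ n • δ + -ρ₀.d (-1) (lam₀ ^ n • δ)) -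
        lam ^ k • Φ n (ρ.E k u) := by
  have h := hΦ k (n - k) u
  have hcancel : lam₀ ^ k * lam₀⁻¹ ^ k = 1 := by
    rw [← mul_zpow, mul_inv_cancel₀ hlam₀, one_zpow]
  have hδ : lam₀ ^ (n - k) • δ = lam₀⁻¹ ^ k • lam₀ ^ n • δ := by
    rw [zpow_sub₀ hlam₀, inv_zpow, smul_smul, div_eq_inv_mul]
  rw [add_sub_cancel, hu (n - k), hδ] at h
  simp only [degAct_apply, map_add, map_sub, map_smul (Φ n), ← ELin_apply hO₀ k] at h ⊢
  simp only [map_smul (ρ₀.ELin hO₀ k) (lam₀⁻¹ ^ k), map_smul (ρ₀.d (-1)) (lam₀⁻¹ ^ k),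
    smul_smul (lam₀ ^ k) (lam₀⁻¹ ^ k), hcancel, one_smul] at h
  push_cast at h
  linear_combination (norm := module) h

lemma E_zpow_smul_eq (hΦ : IsGradedIntertwiner hO hO₀ lam a b lam₀ a₀ b₀ Φ) (hlam : lam ≠ 0)
    (hlam1 : lam ≠ 1) (hlam₀ : lam₀ ≠ 0) (hlam₀1 : lam₀ ≠ 1)
    (hu : ∀ i, Φ i u = s + lam₀ ^ i • δ) (n k : ℤ) :
    ρ₀.E k (lam₀ ^ n • δ) = -Φ n (ρ.d (-1) u) + ((a + n) + (b - 1) * k) • Φ n u +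
      ρ₀.d (-1) s + (-(a₀ + n) + (1 - b₀) * k) • s := by
  have hE (v : W₀) : IsPolyFun fun k : ℤ => ρ₀.E k v := by simpa using isPolyFun_E hO₀ 0 1 v
  have hE' : IsPolyFun fun k : ℤ => -Φ n (ρ.E k u) := by
    simpa using (isPolyFun_E hO 0 1 u).map (-(Φ n).toLinearMap).toAddMonoidHom
  have hpoly : IsPolyFun fun k : ℤ => (-Φ n (ρ.d (-1) u) + ((a + n) + (b - 1) * k) • Φ n u +
      ρ₀.d (-1) s + (-(a₀ + n) + (1 - b₀) * k) • s) + -ρ₀.E k (lam₀ ^ n • δ) :=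
    ((((IsPolyFun.const _).add ((IsPolyFun.const _).affine_smul _ _)).add
      (IsPolyFun.const _)).add ((IsPolyFun.const _).affine_smul _ _)).add
      ((hE _).map (-AddMonoidHom.id W₀))
  have hpoly₁ : IsPolyFun fun k : ℤ =>
      ((a₀ + n) + (b₀ - 1) * k) • lam₀ ^ n • δ + -ρ₀.d (-1) (lam₀ ^ n • δ) :=
    ((IsPolyFun.const _).affine_smul _ _).add (IsPolyFun.const _)
  refine (add_neg_eq_zero.1
    (eq_zero_of_zpow_smul_mem_expPolyAwayFrom (β := (1 : ℂ)) one_ne_zero hpoly ?_ k)).symm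
  have hmem := add_mem (add_mem (zpow_smul_mem_expPolyAwayFrom hlam₀ hlam₀1 (hE s))
    (zpow_smul_mem_expPolyAwayFrom (inv_ne_zero hlam₀) (inv_ne_one.2 hlam₀1) hpoly₁))
    (zpow_smul_mem_expPolyAwayFrom hlam hlam1 hE')
  convert hmem using 1
  funext k
  simpa only [one_zpow, one_smul, ← sub_eq_add_neg, Pi.add_apply, smul_neg] using
    hΦ.sub_E_zpow_smul_eq hlam₀ hu n k

lemma zpow_smul_d_zero_sub_eq (hΦ : IsGradedIntertwiner hO hO₀ lam a b lam₀ a₀ b₀ Φ)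
    (hlam : lam ≠ 0) (hlam1 : lam ≠ 1) (hlam₀ : lam₀ ≠ 0) (hlam₀1 : lam₀ ≠ 1)
    (hu : ∀ i, Φ i u = s + lam₀ ^ i • δ) (n : ℤ) :
    lam₀ ^ n • (ρ₀.d 0 δ - (b - 1) • δ) = (b - b₀) • s ∧
      ∀ i : ℤ, 1 ≤ i → lam₀ ^ n • ρ₀.d i δ = 0 := by
  obtain ⟨h0, hpos⟩ := d_eq_of_forall_E_eq_affine hO₀ (lam₀ ^ n • δ)
    (-Φ n (ρ.d (-1) u) + (a + n) • Φ n u + ρ₀.d (-1) s - (a₀ + n) • s)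
    ((b - 1) • Φ n u + (1 - b₀) • s) fun k => by
      rw [hΦ.E_zpow_smul_eq hlam hlam1 hlam₀ hlam₀1 hu n k]
      module
  simp only [map_smul] at h0 hpos
  refine ⟨?_, hpos⟩
  rw [smul_sub, h0, hu n]
  module

lemma isHW_of_map_eq_add_zpow_smul (hΦ : IsGradedIntertwiner hO hO₀ lam a b lam₀ a₀ b₀ Φ)
    (hlam : lam ≠ 0) (hlam1 : lam ≠ 1) (hlam₀ : lam₀ ≠ 0) (hlam₀1 : lam₀ ≠ 1)
    (hu : ∀ i, Φ i u = s + lam₀ ^ i • δ) (hδ : δ ≠ 0) : ρ₀.IsHW δ (b - 1) := by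
  have h := hΦ.zpow_smul_d_zero_sub_eq hlam hlam1 hlam₀ hlam₀1 hu
  have h01 : (lam₀ - 1) • (ρ₀.d 0 δ - (b - 1) • δ) = 0 := by
    simpa [sub_smul, sub_eq_zero] using (h 1).1.trans (h 0).1.symm
  refine ⟨hδ, sub_eq_zero.1 ((smul_eq_zero.1 h01).resolve_left (sub_ne_zero.2 hlam₀1)), ?_⟩
  simpa using (h 0).2

lemma eq_of_map_eq_add_zpow_smul (hΦ : IsGradedIntertwiner hO hO₀ lam a b lam₀ a₀ b₀ Φ)
    (hlam : lam ≠ 0) (hlam1 : lam ≠ 1) (hlam₀ : lam₀ ≠ 0) (hlam₀1 : lam₀ ≠ 1)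
    (hu : ∀ i, Φ i u = s + lam₀ ^ i • δ) (hs : s ≠ 0) : b = b₀ := by
  have hδ : ρ₀.d 0 δ - (b - 1) • δ = 0 := by
    rcases eq_or_ne δ 0 with rfl | hδ
    · simp
    · rw [(hΦ.isHW_of_map_eq_add_zpow_smul hlam hlam1 hlam₀ hlam₀1 hu hδ).2.1, sub_self]
  have h := (hΦ.zpow_smul_d_zero_sub_eq hlam hlam1 hlam₀ hlam₀1 hu 0).1
  rw [hδ, smul_zero] at h
  exact sub_eq_zero.1 ((smul_eq_zero.1 h.symm).resolve_right hs)

end TwoTerm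

lemma map_d_eq_of_map_eq (hΦ : IsGradedIntertwiner hO hO₀ lam a b lam a₀ b₀ Φ) (hlam : lam ≠ 0)
    (hlam1 : lam ≠ 1) {u : W} (hu : ∀ i, Φ i u = Φ 0 u) (n : ℤ) {i : ℤ} (hi : -1 ≤ i) :
    Φ n (ρ.d i u) = ρ₀.d i (Φ 0 u) := by
  have hu' (i : ℤ) : Φ i u = Φ 0 u + lam ^ i • 0 := by rw [hu, smul_zero, add_zero]
  refine map_d_eq_of_forall_map_E_eq hO hO₀ (Φ n).toLinearMap LinearMap.id u (Φ 0 u)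
    (fun k => ?_) hi
  have h := hΦ.sub_E_zpow_smul_eq hlam hu' n k
  rw [hΦ.E_zpow_smul_eq hlam hlam1 hlam hlam1 hu', sub_self] at h
  refine smul_right_injective _ (zpow_ne_zero k hlam) (sub_eq_zero.1 ?_).symm
  simpa using h.symm

lemma exists_equiv_of_map_eq (hΦ : IsGradedIntertwiner hO hO₀ lam a b lam a₀ b₀ Φ)
    (hs : ρ.IsSimple) (hlam : lam ≠ 0) (hlam1 : lam ≠ 1) {u : W} (hu0 : u ≠ 0)
    (hu : ∀ i, Φ i u = Φ 0 u) :
    ∃ ψ : W ≃ₗ[ℂ] W₀, ∀ i : ℤ, -1 ≤ i → ∀ w : W, ψ (ρ.d i w) = ρ₀.d i (ψ w) := by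
  let U : Submodule ℂ W := ⨅ n, LinearMap.eqLocus (Φ n).toLinearMap (Φ 0).toLinearMap
  have hmem {w : W} : w ∈ U ↔ ∀ n, Φ n w = Φ 0 w := by
    simp only [U, Submodule.mem_iInf, LinearMap.mem_eqLocus, LinearEquiv.coe_coe]
  have hinv : ρ.Invariant U := fun i hi w hw => hmem.2 fun n => by
    rw [hΦ.map_d_eq_of_map_eq hlam hlam1 (hmem.1 hw) n hi,
      hΦ.map_d_eq_of_map_eq hlam hlam1 (hmem.1 hw) 0 hi]
  have htop : U = ⊤ := (hs.2 U hinv).resolve_left fun hbot =>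
    hu0 ((Submodule.eq_bot_iff _).1 hbot u (hmem.2 hu))
  exact ⟨Φ 0, fun i hi w =>
    hΦ.map_d_eq_of_map_eq hlam hlam1 (hmem.1 (htop ▸ Submodule.mem_top)) 0 hi⟩

lemma exists_map_eq_or_of_neg_one (hΦ : IsGradedIntertwiner hO hO₀ (-1) a b (-1) a₀ b₀ Φ)
    (hnt₀ : ¬ ρ₀.IsTrivial) (hs₀ : ρ₀.IsSimple) (hL₀ : ActSimple (ρ₀.Lact (-1) a₀ b₀)) {u : W}
    (hu : ∀ i m, Φ (i + 2 * m) u = Φ i u) :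
    (∀ i, Φ i u = Φ 0 u) ∨ ∀ i, Φ i u = (-1 : ℂ) ^ i • Φ 0 u := by
  have hneg0 : (-1 : ℂ) ≠ 0 := neg_ne_zero.2 one_ne_zero
  have hneg1 : (-1 : ℂ) ≠ 1 := by norm_num
  obtain ⟨s, hs⟩ : ∃ s, s = (2⁻¹ : ℂ) • (Φ 0 u + Φ 1 u) := ⟨_, rfl⟩
  obtain ⟨δ, hδ⟩ : ∃ δ, δ = (2⁻¹ : ℂ) • (Φ 0 u - Φ 1 u) := ⟨_, rfl⟩
  have hsδ (i : ℤ) : Φ i u = s + (-1 : ℂ) ^ i • δ := by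
    rw [hs, hδ]
    obtain ⟨m, rfl | rfl⟩ := i.even_or_odd'
    · have h := hu 0 m
      rw [zero_add] at h
      rw [h, (even_two_mul m).neg_one_zpow]
      module
    · have h := hu 1 m
      rw [add_comm] at h
      rw [h, (odd_two_mul_add_one m).neg_one_zpow]
      module
  rcases eq_or_ne s 0 with hs0 | hs0
  · exact Or.inr fun i => by simp [hsδ, hs0]
  rcases eq_or_ne δ 0 with hδ0 | hδ0
  · exact Or.inl fun i => by simp [hsδ, hδ0]
  obtain rfl := hΦ.eq_of_map_eq_add_zpow_smul hneg0 hneg1 hneg0 hneg1 hsδ hs0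
  exact absurd (hΦ.isHW_of_map_eq_add_zpow_smul hneg0 hneg1 hneg0 hneg1 hsδ hδ0)
    (not_isHW_of_actSimple_neg_one hO₀ hnt₀ hs₀ hL₀ δ)

lemma exists_map_eq_or_map_eq_zpow_smul
    (hΦ : IsGradedIntertwiner hO hO₀ lam a b lam₀ a₀ b₀ Φ) (hnt : ¬ ρ.IsTrivial)
    (hs : ρ.IsSimple) (hnt₀ : ¬ ρ₀.IsTrivial) (hs₀ : ρ₀.IsSimple) (hlam : lam ≠ 0)
    (hlam₀ : lam₀ ≠ 0) (hL : ActSimple (ρ.Lact lam a b)) (hL₀ : ActSimple (ρ₀.Lact lam₀ a₀ b₀)) :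
    ∃ u ≠ 0, (lam₀ = lam ∧ ∀ i, Φ i u = Φ 0 u) ∨
      (lam₀ = lam⁻¹ ∧ ∀ i, Φ i u = lam₀ ^ i • Φ 0 u) := by
  have hlam1 := lam_ne_one_of_actSimple hO hnt hs hL
  have hlam₀1 := lam_ne_one_of_actSimple hO₀ hnt₀ hs₀ hL₀
  have hb := b_ne_one_of_actSimple hO hnt hs hL
  have hb₀ := b_ne_one_of_actSimple hO₀ hnt₀ hs₀ hL₀
  obtain ⟨w, hw0⟩ := hs.1
  obtain ⟨N, hw⟩ := exists_hasOrder hO hnt hs hw0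
  have hw₀ := hΦ.map_mem_annihilatedFrom hnt₀ hs₀ hlam hlam₀ hlam₀1 hb₀ hw.1
  refine ⟨ρ.expCoeff N w, hw.expCoeff_ne_zero, ?_⟩
  by_cases hinv : lam⁻¹ = lam
  · obtain rfl := eq_neg_one_of_inv_eq_self hlam hlam1 hinv
    obtain rfl : lam₀ = -1 := by
      simpa [inv_eq_iff_eq_inv] using hΦ.eq_or_inv_eq hlam hlam1 hlam₀ hb hw (hw₀ 0)
    exact (hΦ.exists_map_eq_or_of_neg_one hnt₀ hs₀ hL₀
      (hΦ.map_add_two_mul_expCoeff hb hw.1 hw₀)).imp (⟨rfl, ·⟩) (⟨hinv.symm, ·⟩)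
  · refine (hΦ.eq_or_inv_eq hlam hlam1 hlam₀ hb hw (hw₀ 0)).imp (fun h => ?_) fun h => ?_
    · subst h
      exact ⟨rfl, hΦ.map_expCoeff_eq hlam hlam1 hinv hb hw.1 (hw₀ 0)⟩
    · obtain rfl := inv_eq_iff_eq_inv.1 h
      exact ⟨rfl, hΦ.map_expCoeff_eq_zpow_smul hlam hlam1 hinv hb hw.1 (hw₀ 0)⟩

lemma isHW_of_map_eq_zpow_smul (hΦ : IsGradedIntertwiner hO hO₀ lam a b lam⁻¹ a₀ b₀ Φ)
    (hlam : lam ≠ 0) (hlam1 : lam ≠ 1) {u : W} (hu0 : u ≠ 0)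
    (hu : ∀ i, Φ i u = lam⁻¹ ^ i • Φ 0 u) :
    ρ.IsHW u (b₀ - 1) ∧ ρ₀.IsHW (Φ 0 u) (b - 1) := by
  have hlam' := inv_ne_zero hlam
  have hlam1' := inv_ne_one.2 hlam1
  refine ⟨hΦ.symm.isHW_of_map_eq_add_zpow_smul hlam' hlam1' hlam hlam1 (u := Φ 0 u) (s := 0)
    (fun i => ?_) hu0, hΦ.isHW_of_map_eq_add_zpow_smul hlam hlam1 hlam' hlam1' (s := 0)
    (fun i => by rw [hu, zero_add]) ((LinearEquiv.map_ne_zero_iff _).2 hu0)⟩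
  rw [LinearEquiv.symm_apply_eq, zero_add, map_smul, hu i, smul_smul, ← mul_zpow,
    mul_inv_cancel₀ hlam, one_zpow, one_smul]

lemma exists_equiv_or_isHW (hΦ : IsGradedIntertwiner hO hO₀ lam a b lam₀ a₀ b₀ Φ)
    (hnt : ¬ ρ.IsTrivial) (hs : ρ.IsSimple) (hnt₀ : ¬ ρ₀.IsTrivial) (hs₀ : ρ₀.IsSimple)
    (hlam : lam ≠ 0) (hlam₀ : lam₀ ≠ 0) (hL : ActSimple (ρ.Lact lam a b))
    (hL₀ : ActSimple (ρ₀.Lact lam₀ a₀ b₀)) :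
    ((∃ ψ : W ≃ₗ[ℂ] W₀, ∀ i : ℤ, -1 ≤ i → ∀ w : W, ψ (ρ.d i w) = ρ₀.d i (ψ w)) ∧
        lam = lam₀ ∧ b = b₀) ∨
      ((∃ w₀, ρ.IsHW w₀ (b₀ - 1)) ∧ (∃ w₀, ρ₀.IsHW w₀ (b - 1)) ∧ lam₀ = lam⁻¹) := by
  have hlam1 := lam_ne_one_of_actSimple hO hnt hs hL
  obtain ⟨u, hu0, ⟨rfl, hu⟩ | ⟨rfl, hu⟩⟩ :=
    hΦ.exists_map_eq_or_map_eq_zpow_smul hnt hs hnt₀ hs₀ hlam hlam₀ hL hL₀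
  · exact Or.inl ⟨hΦ.exists_equiv_of_map_eq hs hlam hlam1 hu0 hu, rfl,
      hΦ.eq_of_map_eq_add_zpow_smul hlam hlam1 hlam hlam1 (δ := 0)
        (fun i => by rw [hu, smul_zero, add_zero]) ((LinearEquiv.map_ne_zero_iff _).2 hu0)⟩
  · obtain ⟨hw, hw₀⟩ := hΦ.isHW_of_map_eq_zpow_smul hlam hlam1 hu0 hu
    exact Or.inr ⟨⟨_, hw⟩, ⟨_, hw₀⟩, rfl⟩

end IsGradedIntertwiner

lemma isGradedIntertwiner_const (ψ : W ≃ₗ[ℂ] W₀)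
    (hψ : ∀ i : ℤ, -1 ≤ i → ∀ w : W, ψ (ρ.d i w) = ρ₀.d i (ψ w)) (hO : ρ.InO) (hO₀ : ρ₀.InO)
    (lam a b : ℂ) : IsGradedIntertwiner hO hO₀ lam a b lam a b fun _ => ψ := fun k j w => by
  simp only [degAct_apply, map_add, map_sub, map_smul, map_E ψ hψ hO, hψ (-1) le_rfl]

end Classification

end WittRep

theorem stmt15 {W W₀ : Type*} [AddCommGroup W] [Module ℂ W] [AddCommGroup W₀] [Module ℂ W₀]
    (ρ : WittRep W) (ρ₀ : WittRep W₀)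
    (hO : ρ.InO) (hO₀ : ρ₀.InO) (hnt : ¬ ρ.IsTrivial) (hnt₀ : ¬ ρ₀.IsTrivial)
    (hs : ρ.IsSimple) (hs₀ : ρ₀.IsSimple)
    (lam lam₀ a a₀ b b₀ : ℂ) (hlam : lam ≠ 0) (hlam₀ : lam₀ ≠ 0)
    (ha : 0 ≤ a.re ∧ a.re < 1) (ha₀ : 0 ≤ a₀.re ∧ a₀.re < 1)
    (hLs : ActSimple (ρ.Lact lam a b)) :
    (∃ φ : (ℤ →₀ W) ≃ₗ[ℂ] (ℤ →₀ W₀),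
        ∀ (k : ℤ) (f : ℤ →₀ W), φ (ρ.Lact lam a b k f) = ρ₀.Lact lam₀ a₀ b₀ k (φ f)) ↔
      (((∃ ψ : W ≃ₗ[ℂ] W₀, ∀ i : ℤ, -1 ≤ i → ∀ w : W, ψ (ρ.d i w) = ρ₀.d i (ψ w)) ∧
          lam = lam₀ ∧ a = a₀ ∧ b = b₀) ∨
        (∃ b' b'₀ : ℂ, (∃ w₀ : W, ρ.IsHW w₀ b') ∧ (∃ w₀' : W₀, ρ₀.IsHW w₀' b'₀) ∧
          lam₀ = lam⁻¹ ∧ a = a₀ ∧ b = b'₀ + 1 ∧ b₀ = b' + 1)) := by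
  constructor
  · rintro ⟨φ, hφ⟩
    obtain rfl := WittRep.eq_of_equiv hO hO₀ hs.1 ha ha₀ φ (hφ 0)
    obtain ⟨Φ, hΦ⟩ := WittRep.exists_isGradedIntertwiner_of_equiv hO hO₀ φ hφ
    refine (hΦ.exists_equiv_or_isHW hnt hs hnt₀ hs₀ hlam hlam₀ hLs
      (WittRep.actSimple_of_equiv φ hφ hLs)).imp (fun ⟨hψ, hl, hb⟩ => ⟨hψ, hl, rfl, hb⟩)
      fun ⟨hw, hw₀, hl⟩ => ⟨_, _, hw, hw₀, hl, rfl, ?_, ?_⟩ <;> rw [sub_add_cancel]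
  · rintro (⟨⟨ψ, hψ⟩, rfl, rfl, rfl⟩ | ⟨b', b'₀, ⟨w₀, hw₀⟩, ⟨w₀', hw₀'⟩, rfl, rfl, rfl, rfl⟩)
    · exact ⟨_, (WittRep.isGradedIntertwiner_const ψ hψ hO hO₀ lam a b).gradedEquiv_Lact⟩
    · obtain ⟨θ, hθ, -⟩ :=
        WittRep.exists_isGradedIntertwiner_swap hO hO₀ hnt hnt₀ hs hs₀ hlam a hw₀ hw₀'
      exact ⟨_, hθ.gradedEquiv_Lact⟩
end

section
/- Let a₁, a₂, b₁, b₂ ∈ ℂ with 0 ≤ Re a₁ < 1, 0 ≤ Re a₂ < 1 and b₁ b₂ ≠ 0, and fix i ∈ {0, 1}. Then L_i(a₁, b₁) ≅ L_i(a₂, b₂) as Virasoro modules if and only if a₁ = a₂ and b₁ = b₂. -/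
/-!
A highest weight vector `w₀` of weight `b ≠ 0` makes `f ↦ f(d_{-1}) w₀` injective, so `L_i(a, b)`
consists of Laurent polynomials in `t` with polynomial coefficients. Measured in the variable
`y = d_{-1} - (a + j) / 2` in `t`-degree `j`, all the operators `d_k` commute with `y ↦ -y` up to
the sign `(-1)^k`, and `d_1` raises the degree in `y` by exactly one. Hence `L_i(a, b)` is the space
of families whose component in `t`-degree `j` has the parity of `j - i`, a space that depends on
neither `a` nor `b`.

Let `ψ : L_i(a₁, b₁) ≅ L_i(a₂, b₂)`. Comparing `d_0`-weights gives `a₁ = a₂` and sends `w₀ ⊗ t^i` to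
`g(y) ⊗ t^i` for an even polynomial `g`. For even `k` the operator `d_{-k} d_k` acts on `g` by a
scalar quadratic in `k`; evaluating this at `y = 0` gives `g(k)` as a quotient of two quadratics in
`k`, the denominator being `-2 b₂² k² + α² / 2` with `α = a₁ + i`, so `g` is constant. Finally
`d_{-1} d_1 - d_{-3} d_3` acts on constants by `16 b - 2 α`, whence `b₁ = b₂`.
-/

open Polynomial

theorem eq_and_eq_of_add_intCast_eq {a₁ a₂ : ℂ} (ha₁ : 0 ≤ a₁.re ∧ a₁.re < 1)
    (ha₂ : 0 ≤ a₂.re ∧ a₂.re < 1) {m n : ℤ} (h : a₁ + m = a₂ + n) : a₁ = a₂ ∧ m = n := by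
  have hre := congrArg (⌊Complex.re ·⌋) h
  simp only [Complex.add_re, Complex.intCast_re, Int.floor_add_intCast,
    Int.floor_eq_zero_iff.mpr ha₁, Int.floor_eq_zero_iff.mpr ha₂, zero_add] at hre
  subst hre
  exact ⟨add_right_cancel h, rfl⟩

section Polynomial

theorem hasseDeriv_succ_X_mul {R : Type*} [CommSemiring R] (n : ℕ) (f : R[X]) :
    hasseDeriv (n + 1) (X * f) = X * hasseDeriv (n + 1) f + hasseDeriv n f := by
  ext (_ | m)
  · simp [hasseDeriv_coeff, coeff_X_mul]
  · simp only [hasseDeriv_coeff, coeff_add, coeff_X_mul, ← add_assoc (m + 1) n 1,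
      show m + (n + 1) = m + 1 + n by ring, Nat.choose_succ_succ, Nat.cast_add]
    ring

theorem sum_pow_smul_hasseDeriv {R : Type*} [CommSemiring R] (r : R) {f : R[X]} {N : ℕ}
    (hN : f.natDegree < N) : ∑ i ∈ Finset.range N, r ^ i • hasseDeriv i f = taylor r f := by
  ext m
  have hdegree : (hasseDeriv m f).natDegree < N :=
    ((natDegree_hasseDeriv_le f m).trans (Nat.sub_le _ _)).trans_lt hN
  rw [taylor_coeff, eval_eq_sum_range' hdegree, finsetSum_coeff]
  refine Finset.sum_congr rfl fun i _ => ?_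
  rw [coeff_smul, hasseDeriv_coeff, hasseDeriv_coeff, smul_eq_mul, mul_comm, add_comm m i,
    Nat.choose_symm_add]

theorem coeff_taylor_of_natDegree_le {R : Type*} [Semiring R] (r : R) {f : R[X]} {n : ℕ}
    (hn : f.natDegree ≤ n) : (taylor r f).coeff n = f.coeff n := by
  obtain rfl | hlt := hn.eq_or_lt
  · exact coeff_taylor_natDegree r f
  · rw [coeff_eq_zero_of_natDegree_lt hlt,
      coeff_eq_zero_of_natDegree_lt (by rwa [natDegree_taylor])]

theorem natDegree_eq_zero_of_natDegree_mul_le {R : Type*} [Semiring R] [NoZeroDivisors R]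
    {p q : R[X]} (hq : q ≠ 0) (h : (q * p).natDegree ≤ q.natDegree) : p.natDegree = 0 := by
  obtain rfl | hp := eq_or_ne p 0
  · exact natDegree_zero
  · rw [natDegree_mul hq hp] at h
    omega

/-! ### The Verma module as a space of polynomials -/

/-- The operator by which `d_n` acts on the polynomial model `f ↦ f(d_{-1}) w₀` of the Verma module
of highest weight `b`, for `n ≥ 0`. -/
noncomputable def vermaOp (b : ℂ) (n : ℕ) : Module.End ℂ ℂ[X] :=
  ((-1) ^ (n + 1) * ((n + 1).factorial : ℂ)) •
    (LinearMap.mulLeft ℂ X ∘ₗ hasseDeriv (n + 1) - b • hasseDeriv n)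

theorem vermaOp_apply (b : ℂ) (n : ℕ) (f : ℂ[X]) :
    vermaOp b n f = ((-1) ^ (n + 1) * ((n + 1).factorial : ℂ)) •
      (X * hasseDeriv (n + 1) f - b • hasseDeriv n f) :=
  rfl

theorem vermaOp_zero_X_mul (b : ℂ) (f : ℂ[X]) :
    vermaOp b 0 (X * f) = X * vermaOp b 0 f - X * f := by
  simp only [vermaOp_apply, zero_add, pow_one, Nat.factorial_one, Nat.cast_one, mul_one,
    hasseDeriv_one, hasseDeriv_zero', derivative_mul, derivative_X, one_mul, smul_eq_C_mul,
    neg_smul, one_smul]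
  ring

theorem vermaOp_succ_X_mul (b : ℂ) (n : ℕ) (f : ℂ[X]) :
    vermaOp b (n + 1) (X * f) = X * vermaOp b (n + 1) f - ((n : ℂ) + 2) • vermaOp b n f := by
  simp only [vermaOp_apply, hasseDeriv_succ_X_mul, smul_eq_C_mul, Nat.factorial_succ (n + 1),
    pow_succ (-1 : ℂ) (n + 1), map_mul, map_add, map_neg, C_1, Nat.cast_mul, Nat.cast_add,
    Nat.cast_one, C_ofNat]
  ring

theorem vermaOp_C (b : ℂ) (n : ℕ) (c : ℂ) :
    vermaOp b n (C c) = if n = 0 then C (b * c) else 0 := by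
  cases n <;> simp [vermaOp_apply, hasseDeriv_C, smul_eq_C_mul]

theorem vermaOp_natDegree (b : ℂ) (f : ℂ[X]) :
    vermaOp b f.natDegree f =
      C ((-1) ^ f.natDegree * ((f.natDegree + 1).factorial : ℂ) * b * f.leadingCoeff) := by
  rw [vermaOp_apply, hasseDeriv_eq_zero_of_lt_natDegree _ _ f.natDegree.lt_succ_self,
    hasseDeriv_natDegree_eq_C]
  simp only [smul_eq_C_mul, map_mul, map_pow, map_neg, C_1]
  ring

end Polynomial

namespace WittRep

variable {W : Type*} [AddCommGroup W] [Module ℂ W] (ρ : WittRep W) {w₀ : W} {b : ℂ}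

/-- The vector `f(d_{-1}) w₀`. -/
noncomputable def polyVec (w₀ : W) : ℂ[X] →ₗ[ℂ] W :=
  LinearMap.applyₗ w₀ ∘ₗ (aeval (ρ.d (-1))).toLinearMap

theorem polyVec_C (w₀ : W) (c : ℂ) : ρ.polyVec w₀ (C c) = c • w₀ := by
  simp [polyVec]

theorem polyVec_X_mul (w₀ : W) (f : ℂ[X]) :
    ρ.polyVec w₀ (X * f) = ρ.d (-1) (ρ.polyVec w₀ f) := by
  simp [polyVec]

theorem d_natCast_d_neg_one (n : ℕ) (w : W) :
    ρ.d n (ρ.d (-1) w) = ρ.d (-1) (ρ.d n w) - ((n : ℂ) + 1) • ρ.d (n - 1) w := by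
  have h := LinearMap.congr_fun (ρ.comm (-1) n le_rfl (by omega)) w
  simp only [LinearMap.sub_apply, LinearMap.comp_apply, LinearMap.smul_apply] at h
  rw [sub_eq_iff_eq_add.mp h, neg_add_eq_sub]
  push_cast
  module

theorem d_polyVec_X_mul {f : ℂ[X]}
    (hf : ∀ n : ℕ, ρ.d n (ρ.polyVec w₀ f) = ρ.polyVec w₀ (vermaOp b n f)) (n : ℕ) :
    ρ.d n (ρ.polyVec w₀ (X * f)) = ρ.polyVec w₀ (vermaOp b n (X * f)) := by
  rw [polyVec_X_mul, d_natCast_d_neg_one, hf]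
  cases n with
  | zero => simp [vermaOp_zero_X_mul, polyVec_X_mul]
  | succ n =>
    rw [show ((n + 1 : ℕ) : ℤ) - 1 = n by push_cast; ring, hf, vermaOp_succ_X_mul, map_sub,
      map_smul, polyVec_X_mul]
    push_cast
    module

theorem d_polyVec (hw : ρ.IsHW w₀ b) (n : ℕ) (f : ℂ[X]) :
    ρ.d n (ρ.polyVec w₀ f) = ρ.polyVec w₀ (vermaOp b n f) := by
  induction f using Polynomial.induction_on generalizing n with
  | C c =>
    rw [polyVec_C, map_smul, vermaOp_C]
    obtain rfl | hn := eq_or_ne n 0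
    · simp only [if_true, Nat.cast_zero, hw.2.1, polyVec_C, smul_smul, mul_comm]
    · simp [hn, hw.2.2 n (by omega)]
  | add p q hp hq => simp only [map_add, hp, hq]
  | monomial m c h =>
    rw [pow_succ', mul_left_comm]
    exact ρ.d_polyVec_X_mul h n

theorem d_polyVec_eq_zero_of_natDegree_lt (hw : ρ.IsHW w₀ b) {f : ℂ[X]} {n : ℕ}
    (hn : f.natDegree < n) : ρ.d n (ρ.polyVec w₀ f) = 0 := by
  rw [d_polyVec ρ hw, vermaOp_apply, hasseDeriv_eq_zero_of_lt_natDegree f n hn,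
    hasseDeriv_eq_zero_of_lt_natDegree f (n + 1) (by omega)]
  simp only [mul_zero, smul_zero, sub_zero, map_zero]

theorem pow_div_factorial_smul_d_polyVec (hw : ρ.IsHW w₀ b) (k : ℂ) (n : ℕ) (f : ℂ[X]) :
    (k ^ (n + 1) / ((n + 1).factorial : ℂ)) • ρ.d n (ρ.polyVec w₀ f) =
      ρ.polyVec w₀ (X * (-k) ^ (n + 1) • hasseDeriv (n + 1) f +
        C (k * b) * (-k) ^ n • hasseDeriv n f) := by
  have hk : k ^ (n + 1) / ((n + 1).factorial : ℂ) * ((-1) ^ (n + 1) * ((n + 1).factorial : ℂ)) =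
      (-k) ^ (n + 1) := by
    rw [neg_pow k]
    field_simp [Nat.factorial_ne_zero]
  rw [d_polyVec ρ hw, vermaOp_apply, ← map_smul, smul_smul, hk]
  simp only [smul_eq_C_mul, pow_succ, map_mul, map_neg]
  ring_nf

theorem E_polyVec (hw : ρ.IsHW w₀ b) (k : ℤ) (f : ℂ[X]) :
    ρ.E k (ρ.polyVec w₀ f) = ρ.polyVec w₀ ((X + C (k * b)) * taylor (-(k : ℂ)) f) := by
  set N := f.natDegree + 1
  have E_eq_sum : ρ.E k (ρ.polyVec w₀ f) = ∑ i ∈ Finset.range (N + 1),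
      (((k : ℂ) ^ i) / (i.factorial : ℂ)) • ρ.d ((i : ℤ) - 1) (ρ.polyVec w₀ f) := by
    refine finsum_eq_sum_of_support_subset _ fun i hi => ?_
    contrapose! hi
    obtain ⟨n, rfl⟩ : ∃ n, i = n + 1 :=
      Nat.exists_eq_succ_of_ne_zero (by rintro rfl; simp at hi)
    rw [Finset.mem_coe, Finset.mem_range] at hi
    rw [Function.notMem_support, Nat.cast_succ, add_sub_cancel_right,
      ρ.d_polyVec_eq_zero_of_natDegree_lt hw (by omega), smul_zero]
  have succ_term (i : ℕ) : (((k : ℂ) ^ (i + 1)) / ((i + 1).factorial : ℂ)) •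
      ρ.d (((i + 1 : ℕ) : ℤ) - 1) (ρ.polyVec w₀ f) =
      ρ.polyVec w₀ (X * (-(k : ℂ)) ^ (i + 1) • hasseDeriv (i + 1) f +
        C (k * b) * (-(k : ℂ)) ^ i • hasseDeriv i f) := by
    rw [Nat.cast_succ, add_sub_cancel_right, pow_div_factorial_smul_d_polyVec ρ hw]
  have zero_term : (((k : ℂ) ^ 0) / ((0 : ℕ).factorial : ℂ)) •
      ρ.d (((0 : ℕ) : ℤ) - 1) (ρ.polyVec w₀ f) =
      ρ.polyVec w₀ (X * (-(k : ℂ)) ^ 0 • hasseDeriv 0 f) := by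
    simp [polyVec_X_mul]
  rw [E_eq_sum, Finset.sum_range_succ', zero_term]
  simp only [succ_term, ← map_sum, ← map_add, Finset.sum_add_distrib, ← Finset.mul_sum]
  rw [add_right_comm, ← mul_add,
    ← Finset.sum_range_succ' fun i => (-(k : ℂ)) ^ i • hasseDeriv i f,
    sum_pow_smul_hasseDeriv _ (by omega : f.natDegree < N + 1),
    sum_pow_smul_hasseDeriv _ (by omega : f.natDegree < N), add_mul]

theorem polyVec_injective (hb : b ≠ 0) (hw : ρ.IsHW w₀ b) :
    Function.Injective (ρ.polyVec w₀) := by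
  refine (injective_iff_map_eq_zero _).mpr fun f hf => ?_
  by_contra hne
  have h := ρ.d_polyVec hw f.natDegree f
  rw [hf, map_zero, vermaOp_natDegree, polyVec_C, eq_comm] at h
  simp [hb, hne, hw.1, Nat.factorial_ne_zero] at h

end WittRep

/-! ### The centered operators -/

/-- The constant term common to the two linear factors of `centeredOp`. -/
noncomputable def centeredCoeff (b : ℂ) (k : ℤ) (α : ℂ) : ℂ :=
  α / 2 + k * (b + 1 / 2)

/-- The action of `d_k` on `L(W, -1, a, b + 1)` from `t`-degree `j` to `t`-degree `k + j`, where
`α = a + j`, when a polynomial `g` at `t`-degree `j` stands for the vector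
`g(d_{-1} - (a + j) / 2) w₀ ⊗ t^j`. -/
noncomputable def centeredOp (b : ℂ) (k : ℤ) (α : ℂ) : Module.End ℂ ℂ[X] :=
  LinearMap.mulLeft ℂ (C ((-1) ^ k) * (C (centeredCoeff b k α) + X)) ∘ₗ taylor (-(k / 2 : ℂ)) +
    LinearMap.mulLeft ℂ (C (centeredCoeff b k α) - X) ∘ₗ taylor (k / 2 : ℂ)

section CenteredOp

variable (b : ℂ) (k : ℤ) (α : ℂ)

theorem centeredOp_apply (g : ℂ[X]) :
    centeredOp b k α g =
      C ((-1) ^ k) * (C (centeredCoeff b k α) + X) * taylor (-(k / 2 : ℂ)) g +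
        (C (centeredCoeff b k α) - X) * taylor (k / 2 : ℂ) g :=
  rfl

theorem centeredOp_eval (g : ℂ[X]) (y : ℂ) :
    (centeredOp b k α g).eval y =
      (-1) ^ k * (centeredCoeff b k α + y) * g.eval (y - k / 2) +
        (centeredCoeff b k α - y) * g.eval (y + k / 2) := by
  simp [centeredOp_apply, taylor_eval, sub_eq_add_neg, add_comm]

theorem centeredOp_zero (g : ℂ[X]) : centeredOp b 0 α g = α • g := by
  refine Polynomial.funext fun y => ?_
  simp only [centeredOp_eval, centeredCoeff, zpow_zero, Int.cast_zero, zero_div, zero_mul, one_mul,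
    add_zero, sub_zero, eval_smul, smul_eq_mul]
  ring

theorem centeredOp_comp_neg_X (g : ℂ[X]) :
    (centeredOp b k α g).comp (-X) = (-1 : ℂ) ^ k • centeredOp b k α (g.comp (-X)) := by
  refine Polynomial.funext fun y => ?_
  have h : ((-1 : ℂ) ^ k) * (-1) ^ k = 1 := by rw [← mul_zpow]; simp
  simp only [eval_comp, eval_neg, eval_X, eval_smul, smul_eq_mul, centeredOp_eval, neg_sub,
    neg_add_rev]
  rw [show -y - (k : ℂ) / 2 = -(k / 2) + -y by ring, show -y + (k : ℂ) / 2 = k / 2 - y by ring]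
  linear_combination -(centeredCoeff b k α + y) * g.eval (k / 2 - y) * h

theorem coeff_centeredOp_one {g : ℂ[X]} {n : ℕ} (hg : g.natDegree ≤ n) :
    (centeredOp b 1 α g).coeff (n + 1) = -2 * g.coeff n := by
  have coeff_taylor_succ (r : ℂ) : (taylor r g).coeff (n + 1) = 0 := by
    rw [coeff_taylor_of_natDegree_le r (by omega), coeff_eq_zero_of_natDegree_lt (by omega)]
  simp only [centeredOp_apply, zpow_one, mul_assoc, add_mul, sub_mul, coeff_add, coeff_sub,
    coeff_C_mul, coeff_X_mul, coeff_taylor_succ, coeff_taylor_of_natDegree_le _ hg, mul_zero]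
  ring

theorem natDegree_centeredOp_le (g : ℂ[X]) :
    (centeredOp b k α g).natDegree ≤ g.natDegree + 1 := by
  have natDegree_mul_taylor_le {p : ℂ[X]} (hp : p.natDegree ≤ 1) (r : ℂ) :
      (p * taylor r g).natDegree ≤ g.natDegree + 1 := by
    rw [add_comm, ← natDegree_taylor g r]
    exact natDegree_mul_le_of_le hp le_rfl
  exact natDegree_add_le_of_degree_le (natDegree_mul_taylor_le (by compute_degree) _)
    (natDegree_mul_taylor_le (by compute_degree) _)

end CenteredOp

/-- The action of `d_{-k} d_k` in `t`-degree `j` of the centered model, where `α = a + j`. -/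
noncomputable def degreeZeroOp (b : ℂ) (k : ℤ) (α : ℂ) : Module.End ℂ ℂ[X] :=
  centeredOp b (-k) (α + k) ∘ₗ centeredOp b k α

section DegreeZeroOp

variable {b α : ℂ} {k : ℤ}

theorem degreeZeroOp_C_of_even (hk : Even k) (c : ℂ) :
    degreeZeroOp b k α (C c) =
      (4 * (α / 2 - k * b) * (α / 2 + k * (b + 1 / 2))) • C c := by
  refine Polynomial.funext fun y => ?_
  simp only [degreeZeroOp, LinearMap.comp_apply, centeredOp_eval, centeredCoeff, hk.neg_one_zpow,
    hk.neg.neg_one_zpow, Int.cast_neg, eval_C, eval_smul, smul_eq_mul]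
  ring

theorem degreeZeroOp_C_of_odd (hk : Odd k) (c : ℂ) :
    degreeZeroOp b k α (C c) = C c * (4 * X ^ 2 + C (k * α - 2 * k ^ 2 * b)) := by
  refine Polynomial.funext fun y => ?_
  simp only [degreeZeroOp, LinearMap.comp_apply, centeredOp_eval, centeredCoeff, hk.neg_one_zpow,
    hk.neg.neg_one_zpow, Int.cast_neg, eval_C, eval_mul, eval_add, eval_pow, eval_X, eval_ofNat]
  ring

theorem degreeZeroOp_one_sub_three_C (c : ℂ) :
    degreeZeroOp b 1 α (C c) - degreeZeroOp b 3 α (C c) = (16 * b - 2 * α) • C c := by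
  rw [degreeZeroOp_C_of_odd odd_one, degreeZeroOp_C_of_odd (by decide), ← mul_sub,
    add_sub_add_left_eq_sub, ← C_sub, smul_eq_C_mul, mul_comm]
  congr 2
  push_cast
  ring

theorem eval_zero_degreeZeroOp_of_even (hk : Even k) {g : ℂ[X]} (hg : g.comp (-X) = g) :
    (degreeZeroOp b k α g).eval 0 =
      2 * (α / 2 - k * b) *
        ((α / 2 + k * (b + 1)) * g.eval 0 + (α / 2 + k * b) * g.eval (k : ℂ)) := by
  have heven : g.eval (-k : ℂ) = g.eval (k : ℂ) := by
    conv_rhs => rw [← hg]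
    simp
  have heval (y : ℂ) : (centeredOp b k α g).eval y =
      (centeredCoeff b k α + y) * g.eval (y - k / 2) +
        (centeredCoeff b k α - y) * g.eval (y + k / 2) := by
    rw [centeredOp_eval, hk.neg_one_zpow, one_mul]
  have hpos : (centeredOp b k α g).eval (k / 2 : ℂ) =
      (centeredCoeff b k α + k / 2) * g.eval 0 +
        (centeredCoeff b k α - k / 2) * g.eval (k : ℂ) := by
    rw [heval, sub_self, add_halves]
  have hneg : (centeredOp b k α g).eval (-(k / 2) : ℂ) =
      (centeredCoeff b k α - k / 2) * g.eval (k : ℂ) +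
        (centeredCoeff b k α + k / 2) * g.eval 0 := by
    rw [heval, neg_add_cancel, ← neg_add', add_halves, heven, sub_neg_eq_add, ← sub_eq_add_neg]
  rw [degreeZeroOp, LinearMap.comp_apply, centeredOp_eval, hk.neg.neg_one_zpow, Int.cast_neg,
    neg_div, zero_sub, zero_add, neg_neg, hpos, hneg, centeredCoeff, centeredCoeff, Int.cast_neg]
  ring

theorem natDegree_eq_zero_of_degreeZeroOp_eq_smul (hb : b ≠ 0) {g : ℂ[X]} (hg : g.comp (-X) = g)
    {γ : ℂ[X]} (hγ : γ.natDegree ≤ 2)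
    (h : ∀ k : ℤ, Even k → degreeZeroOp b k α g = γ.eval (k : ℂ) • g) : g.natDegree = 0 := by
  set p : ℂ[X] := C (-2 * b ^ 2) * X ^ 2 + C (α ^ 2 / 2)
  set q : ℂ[X] := C (g.eval 0) *
    (γ - C 2 * (C (α / 2) - C b * X) * (C (α / 2) + C (b + 1) * X))
  have hp : p.natDegree = 2 := by
    simp only [p]
    compute_degree!
  have hq : q.natDegree ≤ 2 := by
    refine (natDegree_C_mul_le _ _).trans ?_
    simpa using natDegree_sub_le_of_le (n := 2) hγ (by compute_degree)
  have hpq : p * g = q := by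
    refine eq_of_infinite_eval_eq _ _ (Set.infinite_of_injective_forall_mem
      (f := fun n : ℕ => (2 * n : ℂ)) (fun m n hmn => by simpa using hmn) fun n => ?_)
    have h0 := congrArg (eval 0) (h (2 * n) (even_two_mul _))
    rw [eval_zero_degreeZeroOp_of_even (even_two_mul _) hg] at h0
    simp only [eval_smul, smul_eq_mul] at h0
    simp only [Set.mem_ofPred_eq, p, q, eval_mul, eval_add, eval_sub, eval_pow, eval_C, eval_X]
    push_cast at h0
    linear_combination h0
  have hp0 : p ≠ 0 := ne_zero_of_natDegree_gt (n := 1) (by omega)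
  exact natDegree_eq_zero_of_natDegree_mul_le hp0 (by rwa [hpq, hp])

theorem eq_of_degreeZeroOp_eq_smul {b' : ℂ} (hb : b ≠ 0) {g : ℂ[X]} (hg : g.comp (-X) = g)
    (hg0 : g ≠ 0)
    (heven : ∀ k : ℤ, Even k → degreeZeroOp b k α g =
      (4 * (α / 2 - k * b') * (α / 2 + k * (b' + 1 / 2))) • g)
    (hodd : degreeZeroOp b 1 α g - degreeZeroOp b 3 α g = (16 * b' - 2 * α) • g) : b' = b := by
  have hconst : g.natDegree = 0 := by
    refine natDegree_eq_zero_of_degreeZeroOp_eq_smul (α := α) hb hg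
      (γ := C 4 * (C (α / 2) - C b' * X) * (C (α / 2) + C (b' + 1 / 2) * X)) ?_ fun k hk => ?_
    · compute_degree
    · rw [heven k hk]
      simp only [eval_mul, eval_sub, eval_add, eval_C, eval_X, mul_comm b', mul_comm (b' + 1 / 2)]
  rw [eq_C_of_natDegree_eq_zero hconst] at hodd hg0
  rw [degreeZeroOp_one_sub_three_C] at hodd
  linear_combination -smul_left_injective ℂ hg0 hodd / 16

end DegreeZeroOp

/-- The polynomials with `f(-y) = (-1)^n f(y)`. -/
noncomputable def parityPolynomials (n : ℤ) : Submodule ℂ ℂ[X] :=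
  Module.End.eigenspace (algEquivAevalNegX (R := ℂ)).toLinearMap ((-1) ^ n)

section ParityPolynomials

theorem mem_parityPolynomials {n : ℤ} {f : ℂ[X]} :
    f ∈ parityPolynomials n ↔ f.comp (-X) = (-1 : ℂ) ^ n • f := by
  rw [parityPolynomials, Module.End.mem_eigenspace_iff, comp_eq_aeval]
  rfl

theorem parityPolynomials_congr {m n : ℤ} (h : Even (m - n)) :
    parityPolynomials m = parityPolynomials n := by
  rw [parityPolynomials, parityPolynomials, ← sub_add_cancel m n, zpow_add₀ (by simp),
    h.neg_one_zpow, one_mul]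

theorem C_mem_parityPolynomials_zero (c : ℂ) : C c ∈ parityPolynomials 0 := by
  simp [mem_parityPolynomials]

theorem X_pow_mem_parityPolynomials (n : ℕ) : X ^ n ∈ parityPolynomials n := by
  rw [mem_parityPolynomials, X_pow_comp, neg_pow, zpow_natCast, smul_eq_C_mul]
  simp

theorem even_sub_of_coeff_ne_zero {n : ℤ} {f : ℂ[X]} (hf : f ∈ parityPolynomials n) {m : ℕ}
    (hm : f.coeff m ≠ 0) : Even (n - m) := by
  have h := congrArg (coeff · m) (mem_parityPolynomials.mp hf)
  rw [show (-X : ℂ[X]) = C (-1) * X by simp] at h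
  simp only [comp_C_mul_X_coeff, coeff_smul, smul_eq_mul, mul_comm (f.coeff m)] at h
  have h' := mul_right_cancel₀ hm h
  by_contra hodd
  rw [← sub_add_cancel n m, zpow_add₀ (by simp), (Int.not_even_iff_odd.mp hodd).neg_one_zpow,
    zpow_natCast] at h'
  have h1 : (-1 : ℂ) ^ m ≠ 0 := pow_ne_zero _ (by simp)
  exact h1 (by linear_combination h' / 2)

theorem centeredOp_mem_parityPolynomials (b : ℂ) (k : ℤ) (α : ℂ) {n : ℤ} {f : ℂ[X]}
    (hf : f ∈ parityPolynomials n) : centeredOp b k α f ∈ parityPolynomials (k + n) := by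
  rw [mem_parityPolynomials] at hf ⊢
  rw [centeredOp_comp_neg_X, hf, map_smul, smul_smul, zpow_add₀ (by simp)]

theorem exists_natDegree_sub_centeredOp_one_le (b α : ℂ) {m : ℤ} {n : ℕ} {f : ℂ[X]}
    (hf : f ∈ parityPolynomials m) (hn : f.natDegree ≤ n + 1) :
    ∃ g ∈ parityPolynomials (m - 1), g.natDegree ≤ n ∧
      (f - centeredOp b 1 α g).natDegree ≤ n := by
  set g : ℂ[X] := (-(f.coeff (n + 1) / 2)) • X ^ n
  have hgn : g.natDegree ≤ n := (natDegree_smul_le _ _).trans (natDegree_X_pow_le n)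
  refine ⟨g, ?_, hgn, ?_⟩
  · obtain hc | hc := eq_or_ne (f.coeff (n + 1)) 0
    · simp [g, hc]
    · have heven : Even (m - 1 - n) := by
        simpa [sub_sub, add_comm] using even_sub_of_coeff_ne_zero hf hc
      rw [parityPolynomials_congr heven]
      exact Submodule.smul_mem _ _ (X_pow_mem_parityPolynomials n)
  · have hlead : (centeredOp b 1 α g).natDegree ≤ n + 1 :=
      (natDegree_centeredOp_le b 1 α g).trans (by gcongr)
    have hle : (f - centeredOp b 1 α g).natDegree ≤ n + 1 :=
      (natDegree_sub_le_of_le hn hlead).trans_eq (max_self _)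
    refine natDegree_le_pred hle ?_
    rw [coeff_sub, coeff_centeredOp_one b α hgn]
    simp only [g, coeff_smul, coeff_X_pow, if_true, smul_eq_mul]
    ring

end ParityPolynomials

/-- The action of `d_k` on `⊕_j ℂ[y] ⊗ t^j` that is `centeredOp` on each summand. -/
noncomputable def centeredAct (a b : ℂ) (k : ℤ) : Module.End ℂ (ℤ →₀ ℂ[X]) :=
  Finsupp.lsum ℂ fun j : ℤ => Finsupp.lsingle (k + j) ∘ₗ centeredOp b k (a + j)

/-- The polynomials of the parity of `j - i` in each `t`-degree `j`. -/
noncomputable def parityModule (i : ℤ) : Submodule ℂ (ℤ →₀ ℂ[X]) :=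
  gradedSub fun j => parityPolynomials (j - i)

section ParityModule

variable (a b : ℂ) (i k : ℤ)

theorem centeredAct_single (j : ℤ) (g : ℂ[X]) :
    centeredAct a b k (Finsupp.single j g) =
      Finsupp.single (k + j) (centeredOp b k (a + j) g) := by
  simp [centeredAct]

theorem centeredAct_apply (f : ℤ →₀ ℂ[X]) (j : ℤ) :
    centeredAct a b k f j = centeredOp b k (a + (j - k : ℤ)) (f (j - k)) := by
  induction f using Finsupp.induction_linear with
  | zero => simp
  | add f g hf hg => simp [hf, hg]
  | single l g =>
    obtain rfl | hl := eq_or_ne j (k + l)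
    · simp [centeredAct_single]
    · rw [centeredAct_single, Finsupp.single_eq_of_ne hl,
        Finsupp.single_eq_of_ne (fun h => hl (by omega)), map_zero]

variable {i}

theorem single_mem_parityModule {j : ℤ} {g : ℂ[X]} (hg : g ∈ parityPolynomials (j - i)) :
    Finsupp.single j g ∈ parityModule i := by
  intro l
  obtain rfl | hl := eq_or_ne l j
  · rwa [Finsupp.single_eq_same]
  · rw [Finsupp.single_eq_of_ne hl]
    exact zero_mem _

theorem single_one_mem_parityModule (j : ℤ) : Finsupp.single (2 * j + i) 1 ∈ parityModule i := by
  refine single_mem_parityModule ?_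
  rw [parityPolynomials_congr (n := 0) (by simp), ← C_1]
  exact C_mem_parityPolynomials_zero 1

theorem centeredAct_mem_parityModule {f : ℤ →₀ ℂ[X]} (hf : f ∈ parityModule i) :
    centeredAct a b k f ∈ parityModule i := by
  intro j
  change centeredAct a b k f j ∈ parityPolynomials (j - i)
  rw [centeredAct_apply, show j - i = k + (j - k - i) by ring]
  exact centeredOp_mem_parityPolynomials _ _ _ (hf (j - k))

variable {a b}

theorem single_mem_of_centeredAct_one_mem {M : Submodule ℂ (ℤ →₀ ℂ[X])}
    (hM : ∀ f ∈ M, centeredAct a b 1 f ∈ M) (hone : ∀ j : ℤ, Finsupp.single (2 * j + i) 1 ∈ M)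
    (n : ℕ) {j : ℤ} {f : ℂ[X]} (hf : f ∈ parityPolynomials (j - i)) (hn : f.natDegree ≤ n) :
    Finsupp.single j f ∈ M := by
  induction n generalizing j f with
  | zero =>
    rw [eq_C_of_natDegree_le_zero hn]
    obtain hc | hc := eq_or_ne (f.coeff 0) 0
    · simp [hc]
    · obtain ⟨r, hr⟩ := even_sub_of_coeff_ne_zero hf hc
      rw [show j = 2 * r + i by omega, ← mul_one (C _), ← smul_eq_C_mul,
        ← Finsupp.smul_single]
      exact M.smul_mem _ (hone r)
  | succ n ih =>
    obtain ⟨g, hg, hgn, hfg⟩ :=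
      exists_natDegree_sub_centeredOp_one_le b (a + (j - 1 : ℤ)) hf hn
    rw [sub_right_comm] at hg
    have hlead : Finsupp.single j (centeredOp b 1 (a + (j - 1 : ℤ)) g) ∈ M := by
      simpa only [centeredAct_single, add_sub_cancel] using hM _ (ih hg hgn)
    have hlead' := centeredOp_mem_parityPolynomials b 1 (a + (j - 1 : ℤ)) hg
    rw [sub_right_comm, add_sub_cancel] at hlead'
    have hrest := ih (sub_mem hf hlead') hfg
    rw [Finsupp.single_sub] at hrest
    simpa using add_mem hrest hlead

variable (a b i)

theorem span_iterate_centeredAct_eq_parityModule :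
    Submodule.span ℂ {g | ∃ (n : ℕ) (j : ℤ),
      g = (centeredAct a b 1)^[n] (Finsupp.single (2 * j + i) 1)} = parityModule i := by
  set S := {g | ∃ (n : ℕ) (j : ℤ), g = (centeredAct a b 1)^[n] (Finsupp.single (2 * j + i) 1)}
  apply le_antisymm
  · rw [Submodule.span_le]
    rintro _ ⟨n, j, rfl⟩
    exact Set.MapsTo.iterate (s := (parityModule i : Set (ℤ →₀ ℂ[X])))
      (fun _ => centeredAct_mem_parityModule a b 1) n (single_one_mem_parityModule j)
  · have hstable : Submodule.span ℂ S ≤ (Submodule.span ℂ S).comap (centeredAct a b 1) := by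
      refine Submodule.span_le.mpr ?_
      rintro _ ⟨n, j, rfl⟩
      exact Submodule.subset_span ⟨n + 1, j, (Function.iterate_succ_apply' _ _ _).symm⟩
    intro f hf
    rw [← f.sum_single]
    exact Submodule.sum_mem _ fun j _ => single_mem_of_centeredAct_one_mem
      (M := Submodule.span ℂ S) (fun _ hg => hstable hg)
      (fun r => Submodule.subset_span ⟨0, r, rfl⟩) _ (hf j) le_rfl

end ParityModule

/-! ### Comparison with `L(W, -1, a, b + 1)` -/

theorem taylor_centeredOp (b : ℂ) (k : ℤ) (α : ℂ) (g : ℂ[X]) :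
    taylor (-((α + k) / 2)) (centeredOp b k α g) =
      C ((-1) ^ k) * ((X + C (k * b)) * taylor (-(k : ℂ)) (taylor (-(α / 2)) g)) -
        X * taylor (-(α / 2)) g + C (α + k * (b + 1)) * taylor (-(α / 2)) g := by
  refine Polynomial.funext fun y => ?_
  simp only [taylor_eval, centeredOp_eval, centeredCoeff, eval_add, eval_sub, eval_mul, eval_C,
    eval_X]
  ring_nf

namespace WittRep

variable {W : Type*} [AddCommGroup W] [Module ℂ W] (ρ : WittRep W) {w₀ : W} {a b : ℂ}

/-- The map from the centered model to `L(W, -1, a, b + 1)` sending `g` in `t`-degree `j` to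
`g(d_{-1} - (a + j) / 2) w₀ ⊗ t^j`. -/
noncomputable def ofCentered (a : ℂ) (w₀ : W) : (ℤ →₀ ℂ[X]) →ₗ[ℂ] (ℤ →₀ W) :=
  Finsupp.lsum ℂ fun j : ℤ =>
    Finsupp.lsingle j ∘ₗ ρ.polyVec w₀ ∘ₗ taylor (-((a + j) / 2))

theorem ofCentered_single (a : ℂ) (w₀ : W) (j : ℤ) (g : ℂ[X]) :
    ρ.ofCentered a w₀ (Finsupp.single j g) =
      Finsupp.single j (ρ.polyVec w₀ (taylor (-((a + j) / 2)) g)) := by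
  simp [ofCentered]

theorem ofCentered_apply (a : ℂ) (w₀ : W) (f : ℤ →₀ ℂ[X]) (j : ℤ) :
    ρ.ofCentered a w₀ f j = ρ.polyVec w₀ (taylor (-((a + j) / 2)) (f j)) := by
  induction f using Finsupp.induction_linear with
  | zero => simp
  | add f g hf hg => simp [hf, hg]
  | single l g =>
    obtain rfl | hl := eq_or_ne j l
    · simp [ofCentered_single]
    · rw [ofCentered_single, Finsupp.single_eq_of_ne hl, Finsupp.single_eq_of_ne hl, map_zero,
        map_zero]

theorem ofCentered_injective (hb : b ≠ 0) (hw : ρ.IsHW w₀ b) :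
    Function.Injective (ρ.ofCentered a w₀) := fun f g hfg => by
  ext1 j
  have h := DFunLike.congr_fun hfg j
  rw [ofCentered_apply, ofCentered_apply] at h
  exact taylor_injective _ (ρ.polyVec_injective hb hw h)

theorem Lact_ofCentered (hw : ρ.IsHW w₀ b) (k : ℤ) (f : ℤ →₀ ℂ[X]) :
    ρ.Lact (-1) a (b + 1) k (ρ.ofCentered a w₀ f) = ρ.ofCentered a w₀ (centeredAct a b k f) := by
  have hsupport : (ρ.ofCentered a w₀ f).support ⊆ f.support := fun j hj => by
    rw [Finsupp.mem_support_iff, ofCentered_apply] at hj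
    exact Finsupp.mem_support_iff.mpr fun h => hj (by simp [h])
  rw [Lact, Finsupp.sum_of_support_subset _ hsupport _ (by simp [E])]
  rw [centeredAct, Finsupp.lsum_apply, map_finsuppSum]
  refine Finset.sum_congr rfl fun j _ => ?_
  simp only [LinearMap.comp_apply, Finsupp.lsingle_apply, ofCentered_single]
  congr 1
  rw [ofCentered_apply, E_polyVec ρ hw, ← polyVec_X_mul, ← map_smul, ← map_smul, ← map_sub,
    ← map_add, show a + ((k + j : ℤ) : ℂ) = a + j + k by push_cast; ring, taylor_centeredOp]
  simp only [smul_eq_C_mul, add_right_comm]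

/-- `L_i(a, b)` for any integer `i`; it depends only on the parity of `i`. -/
noncomputable def Lparity (a b : ℂ) (w₀ : W) (i : ℤ) : Submodule ℂ (ℤ →₀ W) :=
  Submodule.span ℂ {g | ∃ (n : ℕ) (j : ℤ),
    g = (ρ.Lact (-1) a (b + 1) 1)^[n] (Finsupp.single (2 * j + i) w₀)}

theorem Lzero_eq_Lparity (a b : ℂ) (w₀ : W) : ρ.Lzero a b w₀ = ρ.Lparity a b w₀ 0 := by
  simp only [Lzero, Lparity, add_zero]

theorem Lone_eq_Lparity (a b : ℂ) (w₀ : W) : ρ.Lone a b w₀ = ρ.Lparity a b w₀ 1 :=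
  rfl

theorem map_ofCentered_parityModule (hw : ρ.IsHW w₀ b) (i : ℤ) :
    (parityModule i).map (ρ.ofCentered a w₀) = ρ.Lparity a b w₀ i := by
  have hiterate (n : ℕ) (j : ℤ) :
      ρ.ofCentered a w₀ ((centeredAct a b 1)^[n] (Finsupp.single j 1)) =
        (ρ.Lact (-1) a (b + 1) 1)^[n] (Finsupp.single j w₀) := by
    have hsemiconj : Function.Semiconj (ρ.ofCentered a w₀) (centeredAct a b 1)
        (ρ.Lact (-1) a (b + 1) 1) := fun f => (ρ.Lact_ofCentered hw 1 f).symm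
    rw [(hsemiconj.iterate_right n).eq, ofCentered_single, taylor_one, polyVec_C, one_smul]
  rw [← span_iterate_centeredAct_eq_parityModule a b, Submodule.map_span, Lparity]
  congr 1
  ext g
  constructor
  · rintro ⟨_, ⟨n, j, rfl⟩, rfl⟩
    exact ⟨n, j, hiterate n _⟩
  · rintro ⟨n, j, rfl⟩
    exact ⟨_, ⟨n, j, rfl⟩, hiterate n _⟩

end WittRep

/-! ### Isomorphisms -/

/-- The action of `d_k` on the centered model of `L_i(a, b)`. -/
noncomputable def parityAct (a b : ℂ) (i k : ℤ) : Module.End ℂ (parityModule i) :=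
  (centeredAct a b k).restrict fun _ => centeredAct_mem_parityModule a b k

section ParityAct

variable {a₁ a₂ b₁ b₂ : ℂ} {i : ℤ}

theorem parityAct_zero_apply (a b : ℂ) (f : parityModule i) (j : ℤ) :
    (parityAct a b i 0 f : ℤ →₀ ℂ[X]) j = (a + j) • (f : ℤ →₀ ℂ[X]) j := by
  rw [parityAct, LinearMap.coe_restrict_apply, centeredAct_apply, sub_zero, centeredOp_zero]

theorem coe_parityAct_of_eq_single (a b : ℂ) (k : ℤ) {f : parityModule i} {j : ℤ} {g : ℂ[X]}
    (hf : (f : ℤ →₀ ℂ[X]) = Finsupp.single j g) :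
    (parityAct a b i k f : ℤ →₀ ℂ[X]) = Finsupp.single (k + j) (centeredOp b k (a + j) g) := by
  rw [parityAct, LinearMap.coe_restrict_apply, hf, centeredAct_single]

theorem coe_parityAct_neg_parityAct (a b : ℂ) (k : ℤ) {f : parityModule i} {j : ℤ} {g : ℂ[X]}
    (hf : (f : ℤ →₀ ℂ[X]) = Finsupp.single j g) :
    (parityAct a b i (-k) (parityAct a b i k f) : ℤ →₀ ℂ[X]) =
      Finsupp.single j (degreeZeroOp b k (a + j) g) := by
  rw [coe_parityAct_of_eq_single a b (-k) (coe_parityAct_of_eq_single a b k hf),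
    neg_add_cancel_left, Int.cast_add, add_comm (k : ℂ), ← add_assoc, degreeZeroOp,
    LinearMap.comp_apply]

theorem parityAct_zero_of_eq_single (a b : ℂ) {f : parityModule i} {j : ℤ} {g : ℂ[X]}
    (hf : (f : ℤ →₀ ℂ[X]) = Finsupp.single j g) : parityAct a b i 0 f = (a + j) • f :=
  Subtype.ext <| by
    rw [coe_parityAct_of_eq_single a b 0 hf, centeredOp_zero, zero_add, Submodule.coe_smul, hf,
      Finsupp.smul_single]

variable {a b : ℂ}

theorem parityAct_neg_parityAct_of_even {k : ℤ} (hk : Even k) {f : parityModule i} {j : ℤ} {c : ℂ}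
    (hf : (f : ℤ →₀ ℂ[X]) = Finsupp.single j (C c)) :
    parityAct a b i (-k) (parityAct a b i k f) =
      (4 * ((a + j) / 2 - k * b) * ((a + j) / 2 + k * (b + 1 / 2))) • f :=
  Subtype.ext <| by
    rw [coe_parityAct_neg_parityAct a b k hf, degreeZeroOp_C_of_even hk, Submodule.coe_smul, hf,
      Finsupp.smul_single]

theorem parityAct_neg_one_parityAct_one_sub {f : parityModule i} {j : ℤ} {c : ℂ}
    (hf : (f : ℤ →₀ ℂ[X]) = Finsupp.single j (C c)) :
    parityAct a b i (-1) (parityAct a b i 1 f) - parityAct a b i (-3) (parityAct a b i 3 f) =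
      (16 * b - 2 * (a + j)) • f :=
  Subtype.ext <| by
    rw [Submodule.coe_sub, coe_parityAct_neg_parityAct a b 1 hf,
      coe_parityAct_neg_parityAct a b 3 hf, ← Finsupp.single_sub, degreeZeroOp_one_sub_three_C,
      Submodule.coe_smul, hf, Finsupp.smul_single]

theorem eq_and_eq_single_of_parityAct_zero_eq_smul (ha₁ : 0 ≤ a₁.re ∧ a₁.re < 1)
    (ha₂ : 0 ≤ a₂.re ∧ a₂.re < 1) {f : parityModule i} (hf : f ≠ 0) {j : ℤ}
    (h : parityAct a₂ b₂ i 0 f = (a₁ + j) • f) :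
    a₁ = a₂ ∧ ∃ g ∈ parityPolynomials (j - i), (f : ℤ →₀ ℂ[X]) = Finsupp.single j g := by
  have eq_of_ne {l : ℤ} (hl : (f : ℤ →₀ ℂ[X]) l ≠ 0) : a₁ = a₂ ∧ j = l := by
    refine eq_and_eq_of_add_intCast_eq ha₁ ha₂ (smul_left_injective ℂ hl ?_)
    simpa [h] using parityAct_zero_apply a₂ b₂ f l
  obtain ⟨l, hl⟩ : ∃ l, (f : ℤ →₀ ℂ[X]) l ≠ 0 := by
    by_contra! hzero
    exact hf (Subtype.ext (Finsupp.ext hzero))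
  refine ⟨(eq_of_ne hl).1, _, f.2 j, Finsupp.ext fun m => ?_⟩
  by_cases hm : (f : ℤ →₀ ℂ[X]) m = 0
  · obtain rfl | hmj := eq_or_ne m j
    · rw [Finsupp.single_eq_same]
    · rw [hm, Finsupp.single_eq_of_ne hmj]
  · rw [← (eq_of_ne hm).2, Finsupp.single_eq_same]

theorem eq_of_parityAct_equiv (ha₁ : 0 ≤ a₁.re ∧ a₁.re < 1) (ha₂ : 0 ≤ a₂.re ∧ a₂.re < 1)
    (hb₂ : b₂ ≠ 0) (ψ : parityModule i ≃ₗ[ℂ] parityModule i)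
    (hψ : ∀ k f, ψ (parityAct a₁ b₁ i k f) = parityAct a₂ b₂ i k (ψ f)) :
    a₁ = a₂ ∧ b₁ = b₂ := by
  obtain ⟨v, hv⟩ : ∃ v : parityModule i, (v : ℤ →₀ ℂ[X]) = Finsupp.single i (C 1) :=
    ⟨⟨_, single_mem_parityModule (by simpa using C_mem_parityPolynomials_zero 1)⟩, rfl⟩
  have hψv : ψ v ≠ 0 := ψ.map_ne_zero_iff.mpr fun h => by
    rw [h, Submodule.coe_zero, eq_comm, Finsupp.single_eq_zero, C_1] at hv
    exact one_ne_zero hv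
  obtain ⟨rfl, g, hg, hvg⟩ := eq_and_eq_single_of_parityAct_zero_eq_smul ha₁ ha₂ hψv
    (by rw [← hψ, parityAct_zero_of_eq_single a₁ b₁ hv, map_smul])
  refine ⟨rfl, eq_of_degreeZeroOp_eq_smul (α := a₁ + i) (g := g) hb₂ ?_ ?_ (fun k hk => ?_) ?_⟩
  · simpa only [mem_parityPolynomials, sub_self, zpow_zero, one_smul] using hg
  · rintro rfl
    exact hψv (Subtype.ext (hvg.trans (Finsupp.single_zero i)))
  · have h := congrArg Subtype.val
      (congrArg ψ (parityAct_neg_parityAct_of_even (a := a₁) (b := b₁) hk hv))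
    rw [hψ, hψ, map_smul, coe_parityAct_neg_parityAct a₁ b₂ k hvg, Submodule.coe_smul, hvg,
      Finsupp.smul_single] at h
    exact Finsupp.single_injective i h
  · have h := congrArg Subtype.val
      (congrArg ψ (parityAct_neg_one_parityAct_one_sub (a := a₁) (b := b₁) hv))
    rw [map_sub ψ, hψ, hψ, hψ, hψ, map_smul, Submodule.coe_sub,
      coe_parityAct_neg_parityAct a₁ b₂ 1 hvg, coe_parityAct_neg_parityAct a₁ b₂ 3 hvg,
      ← Finsupp.single_sub, Submodule.coe_smul, hvg, Finsupp.smul_single] at h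
    exact Finsupp.single_injective i h

end ParityAct

namespace WittRep

section Transfer

variable {W : Type*} [AddCommGroup W] [Module ℂ W] (ρ : WittRep W) {w₀ : W} {a b : ℂ}

/-- The centered model of `L_i(a, b)`. -/
noncomputable def parityEquiv (a : ℂ) (hb : b ≠ 0) (hw : ρ.IsHW w₀ b) (i : ℤ) :
    parityModule i ≃ₗ[ℂ] ρ.Lparity a b w₀ i :=
  (parityModule i).equivMapOfInjective _ (ρ.ofCentered_injective hb hw) ≪≫ₗ
    LinearEquiv.ofEq _ _ (ρ.map_ofCentered_parityModule hw i)

theorem coe_parityEquiv (hb : b ≠ 0) (hw : ρ.IsHW w₀ b) {i : ℤ} (f : parityModule i) :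
    (ρ.parityEquiv a hb hw i f : ℤ →₀ W) = ρ.ofCentered a w₀ f :=
  rfl

theorem Lact_parityEquiv (hb : b ≠ 0) (hw : ρ.IsHW w₀ b) {i : ℤ} (k : ℤ) (f : parityModule i) :
    ρ.Lact (-1) a (b + 1) k (ρ.parityEquiv a hb hw i f) =
      ρ.parityEquiv a hb hw i (parityAct a b i k f) := by
  rw [coe_parityEquiv, coe_parityEquiv, Lact_ofCentered ρ hw]
  rfl

end Transfer

variable {W₁ W₂ : Type*} [AddCommGroup W₁] [Module ℂ W₁] [AddCommGroup W₂] [Module ℂ W₂]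
  (ρ₁ : WittRep W₁) (ρ₂ : WittRep W₂) {a₁ a₂ b₁ b₂ : ℂ} {w₁ : W₁} {w₂ : W₂}

theorem exists_Lparity_equiv_iff_exists_parityAct_equiv (hb₁ : b₁ ≠ 0) (hb₂ : b₂ ≠ 0)
    (hw₁ : ρ₁.IsHW w₁ b₁) (hw₂ : ρ₂.IsHW w₂ b₂) (i : ℤ) :
    (∃ φ : ↥(ρ₁.Lparity a₁ b₁ w₁ i) ≃ₗ[ℂ] ↥(ρ₂.Lparity a₂ b₂ w₂ i),
        ∀ (k : ℤ) (u : ↥(ρ₁.Lparity a₁ b₁ w₁ i))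
          (hu : ρ₁.Lact (-1) a₁ (b₁ + 1) k ↑u ∈ ρ₁.Lparity a₁ b₁ w₁ i),
          (↑(φ ⟨ρ₁.Lact (-1) a₁ (b₁ + 1) k ↑u, hu⟩) : ℤ →₀ W₂) =
            ρ₂.Lact (-1) a₂ (b₂ + 1) k ↑(φ u)) ↔
      ∃ ψ : parityModule i ≃ₗ[ℂ] parityModule i,
        ∀ k f, ψ (parityAct a₁ b₁ i k f) = parityAct a₂ b₂ i k (ψ f) := by
  set e₁ := ρ₁.parityEquiv a₁ hb₁ hw₁ i
  set e₂ := ρ₂.parityEquiv a₂ hb₂ hw₂ i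
  have he₁ (k : ℤ) (f : parityModule i)
      (hu : ρ₁.Lact (-1) a₁ (b₁ + 1) k (e₁ f) ∈ ρ₁.Lparity a₁ b₁ w₁ i) :
      (⟨_, hu⟩ : ρ₁.Lparity a₁ b₁ w₁ i) = e₁ (parityAct a₁ b₁ i k f) :=
    Subtype.ext (ρ₁.Lact_parityEquiv hb₁ hw₁ k f)
  have he₂ (k : ℤ) (f : parityModule i) :
      ρ₂.Lact (-1) a₂ (b₂ + 1) k (e₂ f) = e₂ (parityAct a₂ b₂ i k f) :=
    ρ₂.Lact_parityEquiv hb₂ hw₂ k f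
  constructor
  · rintro ⟨φ, hφ⟩
    refine ⟨e₁ ≪≫ₗ φ ≪≫ₗ e₂.symm, fun k f => e₂.injective (Subtype.ext ?_)⟩
    have hu : ρ₁.Lact (-1) a₁ (b₁ + 1) k (e₁ f) ∈ ρ₁.Lparity a₁ b₁ w₁ i := by
      rw [ρ₁.Lact_parityEquiv hb₁ hw₁]
      exact Subtype.coe_prop _
    simpa [he₁, ← he₂] using hφ k (e₁ f) hu
  · rintro ⟨ψ, hψ⟩
    refine ⟨e₁.symm ≪≫ₗ ψ ≪≫ₗ e₂, fun k u hu => ?_⟩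
    obtain ⟨f, rfl⟩ := e₁.surjective u
    simp [he₁, hψ, he₂]

end WittRep

theorem stmt16_general {W₁ W₂ : Type*} [AddCommGroup W₁] [Module ℂ W₁] [AddCommGroup W₂]
    [Module ℂ W₂] (ρ₁ : WittRep W₁) (ρ₂ : WittRep W₂) {a₁ a₂ b₁ b₂ : ℂ}
    (ha₁ : 0 ≤ a₁.re ∧ a₁.re < 1) (ha₂ : 0 ≤ a₂.re ∧ a₂.re < 1)
    (hb₁ : b₁ ≠ 0) (hb₂ : b₂ ≠ 0) {w₁ : W₁} {w₂ : W₂} (hw₁ : ρ₁.IsHW w₁ b₁)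
    (hw₂ : ρ₂.IsHW w₂ b₂) (i : ℤ) :
    (∃ φ : ↥(ρ₁.Lparity a₁ b₁ w₁ i) ≃ₗ[ℂ] ↥(ρ₂.Lparity a₂ b₂ w₂ i),
        ∀ (k : ℤ) (u : ↥(ρ₁.Lparity a₁ b₁ w₁ i))
          (hu : ρ₁.Lact (-1) a₁ (b₁ + 1) k ↑u ∈ ρ₁.Lparity a₁ b₁ w₁ i),
          (↑(φ ⟨ρ₁.Lact (-1) a₁ (b₁ + 1) k ↑u, hu⟩) : ℤ →₀ W₂) =
            ρ₂.Lact (-1) a₂ (b₂ + 1) k ↑(φ u)) ↔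
      a₁ = a₂ ∧ b₁ = b₂ := by
  rw [WittRep.exists_Lparity_equiv_iff_exists_parityAct_equiv ρ₁ ρ₂ hb₁ hb₂ hw₁ hw₂]
  constructor
  · rintro ⟨ψ, hψ⟩
    exact eq_of_parityAct_equiv ha₁ ha₂ hb₂ ψ hψ
  · rintro ⟨rfl, rfl⟩
    exact ⟨LinearEquiv.refl _ _, fun _ _ => rfl⟩

theorem stmt16 {W₁ W₂ : Type*} [AddCommGroup W₁] [Module ℂ W₁] [AddCommGroup W₂] [Module ℂ W₂]
    (ρ₁ : WittRep W₁) (ρ₂ : WittRep W₂)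
    (hO₁ : ρ₁.InO) (hO₂ : ρ₂.InO) (hnt₁ : ¬ ρ₁.IsTrivial) (hnt₂ : ¬ ρ₂.IsTrivial)
    (hs₁ : ρ₁.IsSimple) (hs₂ : ρ₂.IsSimple)
    (a₁ a₂ b₁ b₂ : ℂ)
    (ha₁ : 0 ≤ a₁.re ∧ a₁.re < 1) (ha₂ : 0 ≤ a₂.re ∧ a₂.re < 1)
    (hb₁ : b₁ ≠ 0) (hb₂ : b₂ ≠ 0)
    (w₁ : W₁) (w₂ : W₂) (hw₁ : ρ₁.IsHW w₁ b₁) (hw₂ : ρ₂.IsHW w₂ b₂) :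
    ((∃ φ : ↥(ρ₁.Lzero a₁ b₁ w₁) ≃ₗ[ℂ] ↥(ρ₂.Lzero a₂ b₂ w₂),
        ∀ (k : ℤ) (u : ↥(ρ₁.Lzero a₁ b₁ w₁))
          (hu : ρ₁.Lact (-1) a₁ (b₁ + 1) k ↑u ∈ ρ₁.Lzero a₁ b₁ w₁),
          (↑(φ ⟨ρ₁.Lact (-1) a₁ (b₁ + 1) k ↑u, hu⟩) : ℤ →₀ W₂) =
            ρ₂.Lact (-1) a₂ (b₂ + 1) k ↑(φ u)) ↔
      (a₁ = a₂ ∧ b₁ = b₂)) ∧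
    ((∃ φ : ↥(ρ₁.Lone a₁ b₁ w₁) ≃ₗ[ℂ] ↥(ρ₂.Lone a₂ b₂ w₂),
        ∀ (k : ℤ) (u : ↥(ρ₁.Lone a₁ b₁ w₁))
          (hu : ρ₁.Lact (-1) a₁ (b₁ + 1) k ↑u ∈ ρ₁.Lone a₁ b₁ w₁),
          (↑(φ ⟨ρ₁.Lact (-1) a₁ (b₁ + 1) k ↑u, hu⟩) : ℤ →₀ W₂) =
            ρ₂.Lact (-1) a₂ (b₂ + 1) k ↑(φ u)) ↔
      (a₁ = a₂ ∧ b₁ = b₂)) := by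
  rw [ρ₁.Lzero_eq_Lparity, ρ₂.Lzero_eq_Lparity, ρ₁.Lone_eq_Lparity, ρ₂.Lone_eq_Lparity]
  exact ⟨stmt16_general ρ₁ ρ₂ ha₁ ha₂ hb₁ hb₂ hw₁ hw₂ 0,
    stmt16_general ρ₁ ρ₂ ha₁ ha₂ hb₁ hb₂ hw₁ hw₂ 1⟩
end
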